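/- For every integer n ≥ 1 and real q > 1, the C*-algebra B_n(q) has a composition sequence: there exist closed two-sided ideals B_n(q) = I_0 ⊇ I_1 ⊇ ⋯ ⊇ I_n ⊇ I_{n+1} = 0 such that (i) there is a surjective unital *-homomorphism from B_n(q) onto ℂ with kernel I_1 (so I_0/I_1 ≅ ℂ), and (ii) for each 1 ≤ k ≤ n there is a surjective *-homomorphism from I_k onto the C*-algebra K(ℓ²(ℕ^k)) of compact operators (isomorphic to K(ℓ²(ℤ^k)), since ℓ²(ℤ^k) and ℓ²(ℕ^k) are unitarily isomorphic) whose kernel is I_{k+1} (so I_k/I_{k+1} ≅ K(ℓ²(ℤ^k))). -/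

import Mathlib

set_option synthInstance.maxHeartbeats 1000000
set_option maxHeartbeats 1000000

noncomputable section

/-- The Hilbert space `H_n = ℓ²(ℕⁿ)`. -/
abbrev Hn (n : ℕ) : Type := lp (fun _ : (Fin n → ℕ) => ℂ) 2

/-- The standard orthonormal basis vectors `e_k`, `k ∈ ℕⁿ`, of `ℓ²(ℕⁿ)`. -/
def en {n : ℕ} (k : Fin n → ℕ) : Hn n := lp.single 2 k 1

/-- For an index `j` with `1 ≤ j+1 ≤ n` (so `w_{j+2} = γ^{⊗(n-1-j)} ⊗ α* ⊗ 1^{⊗j}`),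
the (0-based) coordinate `n - 1 - j` at which the shift `α*` acts. -/
def shiftIdx {n : ℕ} (j : Fin n) : Fin n := ⟨n - 1 - (j : ℕ), by have := j.isLt; omega⟩

/-- `IsWFamily q w` says that `w 0, …, w n` are the operators
`w_1, …, w_{n+1}` on `ℓ²(ℕⁿ)` from the paper (for the parameter `q`):
`w_1 e_k = q^{-(k_1+⋯+k_n)} e_k` and for `2 ≤ i ≤ n+1`,
`w_i e_k = q^{-(k_1+⋯+k_{n+1-i})} (1-q^{-2(k_{n+2-i}+1)})^{1/2} e_{k+δ_{n+2-i}}`.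
These are the images of the generators `u_{n+1,i}` of `C(S_q^{2n+1})` (up to a circle
factor) under the faithful representation `π_{n(n-1)⋯21}∘Δ^{n-1}`. -/
def IsWFamily (q : ℝ) {n : ℕ} (w : Fin (n + 1) → (Hn n →L[ℂ] Hn n)) : Prop :=
  (∀ k : Fin n → ℕ, w 0 (en k) = (q ^ (-(∑ m, (k m : ℤ)))) • en k) ∧
  (∀ (j : Fin n) (k : Fin n → ℕ),
    w j.succ (en k) =
      ((q ^ (-(∑ m ∈ Finset.univ.filter (fun m : Fin n => (m : ℕ) < n - 1 - (j : ℕ)), (k m : ℤ)))) *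
          Real.sqrt (1 - q ^ (-2 * ((k (shiftIdx j) : ℤ) + 1)))) •
        en (Function.update k (shiftIdx j) (k (shiftIdx j) + 1)))

/-- `B_n(q)`: the unital C*-subalgebra of bounded operators on `ℓ²(ℕⁿ)` generated by
`{w_i* w_j : 1 ≤ i, j ≤ n+1}` (the closed star-subalgebra they generate); this is the
concrete realization of the standard quantum projective space algebra `C(ℂP_q^n)`. -/
def projAlg {n : ℕ} (w : Fin (n + 1) → (Hn n →L[ℂ] Hn n)) :
    StarSubalgebra ℂ (Hn n →L[ℂ] Hn n) :=
  (StarAlgebra.adjoin ℂ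
    {x : Hn n →L[ℂ] Hn n | ∃ i j : Fin (n + 1), x = star (w i) * w j}).topologicalClosure

noncomputable section

/-- The compact operators on a complex Hilbert space `X`, as a non-unital star subalgebra
of the bounded operators (a C*-algebra).  By Schauder's theorem the condition that the
adjoint `star T` is also compact is automatic, so the carrier is exactly the set of
compact operators. -/
def compactOps (X : Type*) [NormedAddCommGroup X] [InnerProductSpace ℂ X]
    [CompleteSpace X] : NonUnitalStarSubalgebra ℂ (X →L[ℂ] X) where
  carrier := {T | IsCompactOperator ⇑T ∧ IsCompactOperator ⇑(star T)}
  zero_mem' := by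
    constructor <;> simpa using (isCompactOperator_zero (M₁ := X) (M₂ := X))
  add_mem' := by
    rintro a b ⟨ha1, ha2⟩ ⟨hb1, hb2⟩
    refine ⟨?_, ?_⟩
    · simpa [ContinuousLinearMap.coe_add] using ha1.add hb1
    · rw [star_add]; simpa [ContinuousLinearMap.coe_add] using ha2.add hb2
  mul_mem' := by
    rintro a b ⟨ha1, ha2⟩ ⟨hb1, hb2⟩
    refine ⟨?_, ?_⟩
    · simpa [ContinuousLinearMap.mul_def, ContinuousLinearMap.coe_comp] using ha1.comp_clm b
    · rw [star_mul]
      simpa [ContinuousLinearMap.mul_def, ContinuousLinearMap.coe_comp] using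
        hb2.comp_clm (star a)
  smul_mem' := by
    rintro c a ⟨ha1, ha2⟩
    refine ⟨?_, ?_⟩
    · simpa [ContinuousLinearMap.coe_smul] using ha1.smul c
    · rw [star_smul]; simpa [ContinuousLinearMap.coe_smul] using ha2.smul (star c)
  star_mem' := by
    rintro a ⟨ha1, ha2⟩
    exact ⟨ha2, by simpa [star_star] using ha1⟩

open Filter Topology ENNReal NNReal ComplexConjugate

theorem en_apply {n : ℕ} (k j : Fin n → ℕ) : (en k : Hn n) j = if j = k then 1 else 0 := by
  simp [en, lp.single_apply, Pi.single_apply]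

theorem inner_en {n : ℕ} (k : Fin n → ℕ) (ξ : Hn n) : inner ℂ (en k) ξ = ξ k := by
  simp [en, lp.inner_single_left]

theorem norm_en {n : ℕ} (k : Fin n → ℕ) : ‖(en k : Hn n)‖ = 1 := by
  simp [en, lp.norm_single]

theorem hasSum_en {n : ℕ} (ξ : Hn n) : HasSum (fun k => ξ k • (en k : Hn n)) ξ := by
  have := lp.hasSum_single (p := 2) (by simp) ξ
  convert this using 2 with k
  rw [en, ← lp.single_smul]; simp

theorem ext_en {n : ℕ} {F : Type*} [NormedAddCommGroup F] [NormedSpace ℂ F]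
    {S T : Hn n →L[ℂ] F} (h : ∀ k, S (en k) = T (en k)) : S = T := by
  ext1 ξ
  have h1 := (hasSum_en ξ).mapL S
  have h2 := (hasSum_en ξ).mapL T
  simp only [map_smul, h] at h1 h2
  exact h1.unique h2

theorem enorm_sq_eq {n : ℕ} (ξ : Hn n) : ‖ξ‖ₑ ^ 2 = ∑' k, ‖ξ k‖ₑ ^ 2 := by
  have h := lp.hasSum_norm (p := 2) (by simp) ξ
  simp only [ENNReal.toReal_ofNat, Real.rpow_two] at h
  have h2 := ENNReal.ofReal_tsum_of_nonneg (fun k => by positivity) h.summable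
  rw [h.tsum_eq] at h2
  simp only [ENNReal.ofReal_pow (norm_nonneg _), ofReal_norm] at h2
  exact h2

/-- Constructor for bounded operators between the `ℓ²` spaces. -/
theorem exists_ofBound {m n : ℕ} (f : Hn m →ₗ[ℂ] ((Fin n → ℕ) → ℂ)) (C : ℝ≥0)
    (h : ∀ ξ, ∑' j, ‖f ξ j‖ₑ ^ 2 ≤ (C : ℝ≥0∞) ^ 2 * ‖ξ‖ₑ ^ 2) :
    ∃ T : Hn m →L[ℂ] Hn n, (∀ ξ j, T ξ j = f ξ j) ∧ ‖T‖ ≤ C := by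
  have hmem : ∀ ξ, Memℓp (f ξ) 2 := by
    intro ξ
    apply memℓp_gen
    simp only [ENNReal.toReal_ofNat, Real.rpow_two]
    have : ∑' j, ‖f ξ j‖ₑ ^ 2 ≠ ⊤ := by
      refine ((h ξ).trans_lt ?_).ne
      exact ENNReal.mul_lt_top (by simp) (by simp)
    have h2 := ENNReal.summable_toReal this
    simpa using h2
  let T0 : Hn m →ₗ[ℂ] Hn n :=
    { toFun := fun ξ => ⟨f ξ, hmem ξ⟩
      map_add' := fun a b => by ext j; simp; rfl
      map_smul' := fun a b => by ext j; simp }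
  have hT0 : ∀ ξ, ‖T0 ξ‖ ≤ C * ‖ξ‖ := by
    intro ξ
    have h1 : ‖T0 ξ‖ₑ ^ 2 ≤ ((C : ℝ≥0∞) * ‖ξ‖ₑ) ^ 2 := by
      rw [enorm_sq_eq, mul_pow]; exact h ξ
    have h2 := (ENNReal.pow_le_pow_left_iff (n := 2) (by norm_num)).1 h1
    have h3 := ENNReal.toReal_mono (by finiteness) h2
    simpa using h3
  exact ⟨T0.mkContinuous C hT0, fun ξ j => rfl, T0.mkContinuous_norm_le C.2 hT0⟩

/-- Weighted pull-back operators. -/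
theorem exists_pull {m n : ℕ} (τ : (Fin n → ℕ) → (Fin m → ℕ)) (c : (Fin n → ℕ) → ℂ) (C : ℝ≥0)
    (hc : ∀ j, ‖c j‖ ≤ C) (hτ : Set.InjOn τ {j | c j ≠ 0}) :
    ∃ T : Hn m →L[ℂ] Hn n, (∀ ξ j, T ξ j = c j * ξ (τ j)) ∧ ‖T‖ ≤ C := by
  refine exists_ofBound
    { toFun := fun ξ j => c j * ξ (τ j)
      map_add' := fun a b => by ext j; simp [mul_add]
      map_smul' := fun a b => by ext j; simp; ring } C ?_
  intro ξ
  simp only [LinearMap.coe_mk, AddHom.coe_mk]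
  rw [← tsum_subtype_eq_of_support_subset (s := {j | c j ≠ 0})]
  · rw [enorm_sq_eq, ← ENNReal.tsum_mul_left]
    calc ∑' j : {j | c j ≠ 0}, ‖c j * ξ (τ j)‖ₑ ^ 2
        ≤ ∑' j : {j | c j ≠ 0}, (C : ℝ≥0∞) ^ 2 * ‖ξ (τ j)‖ₑ ^ 2 := by
          refine ENNReal.tsum_le_tsum fun j => ?_
          rw [enorm_mul, mul_pow]
          gcongr
          rw [← ofReal_norm]
          exact ENNReal.ofReal_le_of_le_toReal (by simpa using hc j)
      _ ≤ _ := ENNReal.tsum_comp_le_tsum_of_injective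
          (f := fun j : {j | c j ≠ 0} => τ j) (fun a b hab => Subtype.ext (hτ a.2 b.2 hab))
          (fun i => (C : ℝ≥0∞) ^ 2 * ‖ξ i‖ₑ ^ 2)
  · intro j hj
    contrapose! hj
    simp at hj
    simp [hj]

/-- Weighted shifts. -/
theorem exists_wshift {m n : ℕ} (σ : (Fin m → ℕ) → (Fin n → ℕ)) (hσ : Function.Injective σ)
    (c : (Fin m → ℕ) → ℝ) (C : ℝ≥0) (hc : ∀ j, |c j| ≤ C) :
    ∃ T : Hn m →L[ℂ] Hn n, (∀ k, T (en k) = c k • en (σ k)) ∧ ‖T‖ ≤ C := by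
  classical
  obtain ⟨T, hT, hT'⟩ := exists_pull (m := m) (n := n) (Function.invFun σ)
    (fun j => if j ∈ Set.range σ then (c (Function.invFun σ j) : ℂ) else 0) C
    (by intro j; split_ifs <;> simp [hc]) (by
      intro a ha b hb hab
      have ha' : a ∈ Set.range σ := by by_contra h; exact ha (if_neg h)
      have hb' : b ∈ Set.range σ := by by_contra h; exact hb (if_neg h)
      obtain ⟨a, rfl⟩ := ha'
      obtain ⟨b, rfl⟩ := hb'
      rw [Function.leftInverse_invFun hσ, Function.leftInverse_invFun hσ] at hab
      rw [hab])
  refine ⟨T, fun k => ?_, hT'⟩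
  ext j
  rw [hT]
  simp only [lp.coeFn_smul, Pi.smul_apply, en_apply]
  by_cases h : j ∈ Set.range σ
  · obtain ⟨i, rfl⟩ := h
    rw [Function.leftInverse_invFun hσ]
    by_cases h2 : i = k <;> simp [h2, hσ.eq_iff]
  · have : j ≠ σ k := fun h' => h ⟨k, h'.symm⟩
    simp [h, this]

theorem wshift_norm_le {m n : ℕ} (σ : (Fin m → ℕ) → (Fin n → ℕ)) (hσ : Function.Injective σ)
    (c : (Fin m → ℕ) → ℝ) (C : ℝ) (hC : 0 ≤ C) (hc : ∀ j, |c j| ≤ C)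
    (T : Hn m →L[ℂ] Hn n) (hT : ∀ k, T (en k) = c k • en (σ k)) : ‖T‖ ≤ C := by
  obtain ⟨S, hS, hS'⟩ := exists_wshift σ hσ c ⟨C, hC⟩ hc
  have : T = S := ext_en fun k => by rw [hT, hS]
  rw [this]; exact hS'


theorem isClosed_compactOps (n : ℕ) : IsClosed (compactOps (Hn n) : Set (Hn n →L[ℂ] Hn n)) := by
  have h : IsClosed {T : Hn n →L[ℂ] Hn n | IsCompactOperator T} :=
    isClosed_setOfPred_isCompactOperator
  have : (compactOps (Hn n) : Set (Hn n →L[ℂ] Hn n)) =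
    {T : Hn n →L[ℂ] Hn n | IsCompactOperator T} ∩
      star ⁻¹' {T : Hn n →L[ℂ] Hn n | IsCompactOperator T} := rfl
  rw [this]
  exact h.inter (h.preimage continuous_star)

theorem mul_mem_compactOps {n : ℕ} {a : Hn n →L[ℂ] Hn n} (ha : a ∈ compactOps (Hn n))
    (b : Hn n →L[ℂ] Hn n) : a * b ∈ compactOps (Hn n) := by
  obtain ⟨h1, h2⟩ := ha
  refine ⟨h1.comp_clm b, ?_⟩
  rw [star_mul]
  exact h2.clm_comp (star b)

theorem mul_mem_compactOps' {n : ℕ} {a : Hn n →L[ℂ] Hn n} (ha : a ∈ compactOps (Hn n))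
    (b : Hn n →L[ℂ] Hn n) : b * a ∈ compactOps (Hn n) := by
  have := star_mem (mul_mem_compactOps (star_mem ha) (star b))
  simpa [← star_mul] using this

theorem isCompactOperator_rankOne {m n : ℕ} (x : Hn n) (y : Hn m) :
    IsCompactOperator (InnerProductSpace.rankOne ℂ x y) := by
  rw [InnerProductSpace.rankOne_def']
  have h : IsCompactOperator (ContinuousLinearMap.toSpanSingleton ℂ x) := by
    exact isCompactOperator_of_locallyCompactSpace_rng (ContinuousLinearMap.toSpanSingleton ℂ x)
  exact h.comp_clm _

theorem rankOne_mem {n : ℕ} (x y : Hn n) :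
    InnerProductSpace.rankOne ℂ x y ∈ compactOps (Hn n) := by
  refine ⟨isCompactOperator_rankOne x y, ?_⟩
  rw [ContinuousLinearMap.star_eq_adjoint, InnerProductSpace.adjoint_rankOne]
  exact isCompactOperator_rankOne y x
set_option linter.unusedSimpArgs false
set_option linter.deprecated false

theorem isClosed_tendsto {α E F : Type*} [NormedAddCommGroup E] [NormedSpace ℂ E]
    [NormedAddCommGroup F] [NormedSpace ℂ F] (l : Filter α) (A : α → E →ₗ[ℂ] F) (C : ℝ)
    (h : ∀ N x, ‖A N x‖ ≤ C * ‖x‖) : IsClosed {x | Tendsto (fun N => A N x) l (𝓝 0)} := by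
  refine isClosed_of_closure_subset fun x hx => ?_
  have hC : 0 < |C| + 1 := by positivity
  rw [Set.mem_setOf_eq, Metric.tendsto_nhds]
  intro ε hε
  obtain ⟨y, hy, hxy⟩ := Metric.mem_closure_iff.1 hx (ε / (2 * (|C| + 1))) (by positivity)
  rw [Set.mem_setOf_eq, Metric.tendsto_nhds] at hy
  filter_upwards [hy (ε / 2) (by positivity)] with N hN
  rw [dist_zero_right] at hN ⊢
  have h1 : ‖A N (x - y)‖ ≤ ε / 2 := by
    refine (h N _).trans ?_
    rw [dist_eq_norm] at hxy
    calc C * ‖x - y‖ ≤ (|C| + 1) * (ε / (2 * (|C| + 1))) := by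
          gcongr
          linarith [le_abs_self C]
      _ = ε / 2 := by field_simp
  calc ‖A N x‖ = ‖A N (x - y) + A N y‖ := by rw [← map_add]; simp
    _ ≤ _ := norm_add_le _ _
    _ < ε := by linarith

theorem tendsto_comp_compact {α E : Type*} [NormedAddCommGroup E] [NormedSpace ℂ E]
    (l : Filter α) (A : α → E →L[ℂ] E) (C : ℝ) (hC : ∀ N, ‖A N‖ ≤ C)
    (hA : ∀ x, Tendsto (fun N => A N x) l (𝓝 0)) (T : E →L[ℂ] E) (hT : IsCompactOperator T) :
    Tendsto (fun N => A N * T) l (𝓝 0) := by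
  have hcpt := hT.isCompact_closure_image_closedBall (f := (T : E →ₗ[ℂ] E)) 1
  rw [Metric.tendsto_nhds]
  intro ε hε
  obtain ⟨t, -, htf, ht⟩ := hcpt.finite_cover_balls (e := ε / (4 * (|C| + 1))) (by positivity)
  have hev : ∀ᶠ N in l, ∀ y ∈ t, ‖A N y‖ < ε / 4 := by
    rw [htf.eventually_all]
    intro y _
    have := (Metric.tendsto_nhds.1 (hA y)) (ε / 4) (by positivity)
    simpa using this
  filter_upwards [hev] with N hN
  rw [dist_zero_right]
  refine lt_of_le_of_lt (ContinuousLinearMap.opNorm_le_of_unit_norm (C := ε / 2) (by positivity)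
    (fun x hx => ?_)) (by linarith)
  have hx1 : T x ∈ closure ((T : E →ₗ[ℂ] E) '' Metric.closedBall 0 1) :=
    subset_closure ⟨x, by simp [hx], rfl⟩
  have := ht hx1
  simp only [Set.mem_iUnion, Metric.mem_ball, exists_prop] at this
  obtain ⟨y, hy, hxy⟩ := this
  rw [dist_eq_norm] at hxy
  have h1 : ‖A N (T x - y)‖ ≤ ε / 4 := by
    refine ((A N).le_opNorm _).trans ?_
    calc ‖A N‖ * ‖T x - y‖ ≤ (|C| + 1) * (ε / (4 * (|C| + 1))) := by
          gcongr
          linarith [le_abs_self C, hC N]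
      _ = ε / 4 := by field_simp
  calc ‖(A N * T) x‖ = ‖A N (T x - y) + A N y‖ := by
        rw [← map_add]; simp
    _ ≤ _ := norm_add_le _ _
    _ ≤ ε / 2 := by linarith [hN y hy]

open InnerProductSpace in
/-- Projection onto the span of finitely many basis vectors. -/
def PF {n : ℕ} (F : Finset (Fin n → ℕ)) : Hn n →L[ℂ] Hn n := ∑ k ∈ F, rankOne ℂ (en k) (en k)

theorem PF_apply {n : ℕ} (F : Finset (Fin n → ℕ)) (ξ : Hn n) : PF F ξ = ∑ k ∈ F, ξ k • en k := by
  simp [PF, inner_en]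

theorem PF_en {n : ℕ} (F : Finset (Fin n → ℕ)) (k : Fin n → ℕ) :
    PF F (en k) = (if k ∈ F then (1 : ℝ) else 0) • en k := by
  simp [PF_apply, en_apply]

theorem PF_star {n : ℕ} (F : Finset (Fin n → ℕ)) : star (PF F) = PF F := by
  simp [PF, ContinuousLinearMap.star_eq_adjoint]

theorem PF_mem {n : ℕ} (F : Finset (Fin n → ℕ)) : PF F ∈ compactOps (Hn n) :=
  sum_mem fun _ _ => rankOne_mem _ _

theorem one_sub_PF_norm {n : ℕ} (F : Finset (Fin n → ℕ)) : ‖(1 - PF F : Hn n →L[ℂ] Hn n)‖ ≤ 1 := by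
  refine wshift_norm_le id Function.injective_id (fun k => if k ∈ F then 0 else 1) 1 (by simp)
    (fun j => by split_ifs <;> simp) _ (fun k => ?_)
  by_cases h : k ∈ F <;> simp [PF_en, h]

theorem PF_tendsto {n : ℕ} (ξ : Hn n) :
    Tendsto (fun F : Finset (Fin n → ℕ) => (1 - PF F : Hn n →L[ℂ] Hn n) ξ) atTop (𝓝 0) := by
  have h : Tendsto (fun F : Finset (Fin n → ℕ) => PF F ξ) atTop (𝓝 ξ) := by
    simp only [PF_apply]; exact hasSum_en ξ
  simpa using (tendsto_const_nhds (x := ξ)).sub h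

theorem compactOps_mem_of_closed {n : ℕ} (S : Submodule ℂ (Hn n →L[ℂ] Hn n))
    (hS : IsClosed (S : Set (Hn n →L[ℂ] Hn n)))
    (h : ∀ j k, InnerProductSpace.rankOne ℂ (en j) (en k) ∈ S)
    (T : Hn n →L[ℂ] Hn n) (hT : T ∈ compactOps (Hn n)) : T ∈ S := by
  have h1 := tendsto_comp_compact atTop (fun F : Finset (Fin n → ℕ) => 1 - PF F) 1
    one_sub_PF_norm PF_tendsto T hT.1
  have h2 := tendsto_comp_compact atTop (fun F : Finset (Fin n → ℕ) => 1 - PF F) 1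
    one_sub_PF_norm PF_tendsto (star T) hT.2
  have h3 : Tendsto (fun F : Finset (Fin n → ℕ) => T * (1 - PF F)) atTop (𝓝 0) := by
    have := (continuous_star.tendsto _).comp h2
    simpa [Function.comp_def, PF_star] using this
  have h4 : Tendsto (fun F : Finset (Fin n → ℕ) => (1 - PF F) * T + PF F * (T * (1 - PF F)))
      atTop (𝓝 0) := by
    have : Tendsto (fun F : Finset (Fin n → ℕ) => PF F * (T * (1 - PF F))) atTop (𝓝 0) := by
      refine squeeze_zero_norm (a := fun F => 2 * ‖T * (1 - PF F)‖) (fun F => ?_) ?_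
      · refine (norm_mul_le _ _).trans ?_
        gcongr
        have e : PF F = 1 - (1 - PF F) := by simp
        rw [e]
        refine (norm_sub_le _ _).trans ?_
        have := one_sub_PF_norm F
        have h1 : ‖(1 : Hn n →L[ℂ] Hn n)‖ ≤ 1 := ContinuousLinearMap.norm_id_le
        linarith
      · simpa using (h3.norm).const_mul 2
    simpa using h1.add this
  have h5 : Tendsto (fun F : Finset (Fin n → ℕ) => PF F * T * PF F) atTop (𝓝 T) := by
    have := (tendsto_const_nhds (x := T)).sub h4
    rw [sub_zero] at this
    refine this.congr fun F => ?_
    noncomm_ring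
  refine hS.mem_of_tendsto h5 (Eventually.of_forall fun F => ?_)
  have e : PF F * T * PF F = ∑ j ∈ F, ∑ k ∈ F,
      (T (en k) j) • InnerProductSpace.rankOne ℂ (en j) (en k) := by
    ext1 ξ
    simp only [ContinuousLinearMap.mul_apply, PF_apply, ContinuousLinearMap.sum_apply,
      ContinuousLinearMap.smul_apply, InnerProductSpace.rankOne_apply, inner_en, map_sum,
      map_smul, lp.coeFn_sum, Finset.sum_apply, lp.coeFn_smul, Pi.smul_apply, Finset.sum_smul,
      smul_smul, smul_eq_mul]
    simp only [mul_comm, Finset.smul_sum, smul_smul]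
    rw [Finset.sum_comm]
  rw [e]
  exact S.sum_mem fun j _ => S.sum_mem fun k _ => S.smul_mem _ (h j k)

theorem wshift_compact {n : ℕ} (σ : (Fin n → ℕ) → (Fin n → ℕ)) (hσ : Function.Injective σ)
    (c : (Fin n → ℕ) → ℝ) (hc : Tendsto c cofinite (𝓝 0))
    (T : Hn n →L[ℂ] Hn n) (hT : ∀ k, T (en k) = c k • en (σ k)) : T ∈ compactOps (Hn n) := by
  have : Tendsto (fun F : Finset (Fin n → ℕ) => T * PF F) atTop (𝓝 T) := by
    rw [Metric.tendsto_nhds]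
    intro ε hε
    have h1 := (Metric.tendsto_nhds.1 hc) (ε / 2) (by positivity)
    rw [eventually_cofinite] at h1
    filter_upwards [eventually_ge_atTop h1.toFinset] with F hF
    rw [dist_eq_norm]
    refine lt_of_le_of_lt (wshift_norm_le σ hσ (fun k => if k ∈ F then 0 else - c k) (ε / 2)
      (by positivity) (fun k => ?_) _ fun k => ?_) (half_lt_self hε)
    · split_ifs with hk
      · simp; positivity
      · have : k ∉ h1.toFinset := fun h => hk (hF h)
        simp at this
        simpa using this.le
    · by_cases hk : k ∈ F <;> simp [PF_en, hk, hT]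
  refine (isClosed_compactOps n).mem_of_tendsto this (Eventually.of_forall fun F => ?_)
  exact mul_mem_compactOps' (PF_mem F) T

/-! ### The block operators -/

/-- Total degree of a multi-index. -/
def dg {n : ℕ} (k : Fin n → ℕ) : ℕ := ∑ m, k m

theorem dg_succ {n : ℕ} (k : Fin (n + 1) → ℕ) : dg k = dg (Fin.init k) + k (Fin.last n) := by
  simp [dg, Fin.sum_univ_castSucc, Fin.init]

theorem dg_snoc {n : ℕ} (k : Fin n → ℕ) (m : ℕ) :
    dg (Fin.snoc k m : Fin (n + 1) → ℕ) = dg k + m := by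
  simp [dg_succ]

theorem init_dg_inj {n : ℕ} {j k : Fin (n + 1) → ℕ} (h1 : dg j = dg k)
    (h2 : Fin.init j = Fin.init k) : j = k := by
  rw [← Fin.snoc_init_self j, ← Fin.snoc_init_self k, h2]
  rw [dg_succ, dg_succ, h2] at h1
  congr 1
  omega

theorem exists_V (n N : ℕ) : ∃ T : Hn n →L[ℂ] Hn (n + 1),
    (∀ ξ j, T ξ j = (if dg j = N then (1 : ℂ) else 0) * ξ (Fin.init j)) ∧ ‖T‖ ≤ (1 : ℝ≥0) := by
  refine exists_pull _ _ 1 (fun j => by split_ifs <;> simp) ?_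
  intro a ha b hb hab
  simp at ha hb
  exact init_dg_inj (ha.trans hb.symm) hab

/-- The partial isometry `e_k ↦ e_{(k, N - |k|)}`. -/
def V (n N : ℕ) : Hn n →L[ℂ] Hn (n + 1) := (exists_V n N).choose

theorem V_apply {n N : ℕ} (ξ : Hn n) (j : Fin (n + 1) → ℕ) :
    V n N ξ j = if dg j = N then ξ (Fin.init j) else 0 := by
  rw [V, (exists_V n N).choose_spec.1]; simp

theorem V_norm (n N : ℕ) : ‖V n N‖ ≤ 1 := (exists_V n N).choose_spec.2

/-- The adjoint of `V`. -/
def Vs (n N : ℕ) : Hn (n + 1) →L[ℂ] Hn n := (V n N).adjoint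

theorem Vs_norm (n N : ℕ) : ‖Vs n N‖ ≤ 1 := by
  rw [Vs, LinearIsometryEquiv.norm_map]; exact V_norm n N

theorem Vs_en {n N : ℕ} (j : Fin (n + 1) → ℕ) :
    Vs n N (en j) = if dg j = N then en (Fin.init j) else 0 := by
  ext k
  rw [← inner_en k, Vs, ContinuousLinearMap.adjoint_inner_right, ← inner_conj_symm, inner_en,
    V_apply]
  by_cases h : dg j = N <;> simp [h, en_apply]
  by_cases h2 : k = Fin.init j
  · simp [h2]
  · simp [h2, Ne.symm h2]

theorem V_en {n N : ℕ} (k : Fin n → ℕ) :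
    V n N (en k) = if dg k ≤ N then en (Fin.snoc k (N - dg k) : Fin (n + 1) → ℕ) else 0 := by
  ext j
  rw [V_apply]
  by_cases h : dg k ≤ N
  · simp only [h, if_true, en_apply]
    by_cases h2 : j = Fin.snoc k (N - dg k)
    · subst h2
      simp [dg_snoc, h]
    · by_cases h3 : dg j = N
      · have : Fin.init j ≠ k := by
          rintro rfl
          apply h2
          apply init_dg_inj
          · rw [dg_snoc]; omega
          · simp
        simp [h2, this]
      · simp [h2, h3]
  · by_cases h3 : dg j = N
    · have : Fin.init j ≠ k := by
        rintro rfl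
        rw [dg_succ] at h3
        omega
      simp [h, h3, en_apply, this]
    · simp [h, h3]

theorem V_en_init {n : ℕ} (k : Fin (n + 1) → ℕ) : V n (dg k) (en (Fin.init k)) = en k := by
  have : dg (Fin.init k) ≤ dg k := by rw [dg_succ k]; omega
  rw [V_en, if_pos this]
  congr 1
  apply init_dg_inj
  · rw [dg_snoc]; omega
  · simp

theorem Vs_apply {n N : ℕ} (ξ : Hn (n + 1)) (k : Fin n → ℕ) :
    Vs n N ξ k = if dg k ≤ N then ξ (Fin.snoc k (N - dg k) : Fin (n + 1) → ℕ) else 0 := by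
  rw [← inner_en k, Vs, ContinuousLinearMap.adjoint_inner_right, V_en]
  split_ifs <;> simp [inner_en]

/-- The projection onto degree at most `N`. -/
def PN (n N : ℕ) : Hn n →L[ℂ] Hn n := Vs n N ∘L V n N

theorem PN_en {n N : ℕ} (k : Fin n → ℕ) :
    PN n N (en k) = if dg k ≤ N then en k else 0 := by
  rw [PN, ContinuousLinearMap.comp_apply, V_en]
  split_ifs with h
  · simp [Vs_en, dg_snoc, h]
  · simp

theorem PN_star (n N : ℕ) : star (PN n N) = PN n N := by
  rw [ContinuousLinearMap.star_eq_adjoint, PN, ContinuousLinearMap.adjoint_comp, Vs,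
    ContinuousLinearMap.adjoint_adjoint]

theorem Vs_V_ne {n N M : ℕ} (h : N ≠ M) (ξ : Hn n) : Vs n N (V n M ξ) = 0 := by
  ext k
  rw [Vs_apply]
  split_ifs with h2
  · rw [V_apply, dg_snoc, if_neg (by omega)]; simp
  · simp

theorem one_sub_PN_norm (n N : ℕ) : ‖(1 - PN n N : Hn n →L[ℂ] Hn n)‖ ≤ 1 := by
  refine wshift_norm_le id Function.injective_id (fun k => if dg k ≤ N then 0 else 1) 1 (by simp)
    (fun j => by split_ifs <;> simp) _ (fun k => ?_)
  by_cases h : dg k ≤ N <;> simp [PN_en, h]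

theorem PN_norm (n N : ℕ) : ‖(PN n N : Hn n →L[ℂ] Hn n)‖ ≤ 1 := by
  refine wshift_norm_le id Function.injective_id (fun k => if dg k ≤ N then 1 else 0) 1 (by simp)
    (fun j => by split_ifs <;> simp) _ (fun k => ?_)
  by_cases h : dg k ≤ N <;> simp [PN_en, h]

theorem mem_of_en {n : ℕ} (S : Submodule ℂ (Hn n)) (hS : IsClosed (S : Set (Hn n))) (h : ∀ k, en k ∈ S) (ξ : Hn n) :
    ξ ∈ S :=
  hS.mem_of_tendsto (hasSum_en ξ)
    (Eventually.of_forall fun F => S.sum_mem fun k _ => S.smul_mem _ (h k))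

theorem tsum_ite_le {α β : Type*} (p : α → Prop) [DecidablePred p] (φ : α → β)
    (hφ : Set.InjOn φ {a | p a}) (g : β → ℝ≥0∞) :
    ∑' a, (if p a then g (φ a) else 0) ≤ ∑' b, g b := by
  rw [← tsum_subtype_eq_of_support_subset (s := {a | p a})]
  · calc ∑' a : {a | p a}, (if p a then g (φ a) else 0) = ∑' a : {a | p a}, g (φ a) := by
          refine tsum_congr fun a => if_pos a.2
      _ ≤ _ := ENNReal.tsum_comp_le_tsum_of_injective
          (f := fun a : {a | p a} => φ a) (fun a b hab => Subtype.ext (hφ a.2 b.2 hab)) g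
  · intro a ha
    by_contra h
    exact ha (if_neg h)

theorem tsum_Vs {n : ℕ} (ξ : Hn (n + 1)) : ∑' N, ‖Vs n N ξ‖ₑ ^ 2 ≤ ‖ξ‖ₑ ^ 2 := by
  simp only [enorm_sq_eq]
  rw [← ENNReal.tsum_prod (f := fun N k => ‖Vs n N ξ k‖ₑ ^ 2)]
  refine le_trans (le_of_eq ?_) (tsum_ite_le (fun p : ℕ × (Fin n → ℕ) => dg p.2 ≤ p.1)
    (fun p => (Fin.snoc p.2 (p.1 - dg p.2) : Fin (n + 1) → ℕ)) ?_ (fun j => ‖ξ j‖ₑ ^ 2))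
  · refine tsum_congr fun p => ?_
    rw [Vs_apply]
    split_ifs <;> simp
  · rintro ⟨N, k⟩ h ⟨M, l⟩ h' he
    simp only [Set.mem_setOf_eq] at h h' he
    have h1 := congrArg Fin.init he
    simp only [Fin.init_snoc] at h1
    subst h1
    have h2 := congrArg dg he
    simp only [dg_snoc] at h2
    have : N = M := by omega
    rw [this]

/-- Block operators `∑ V_{N+s} x_N V_N^*`. -/
theorem exists_L {n : ℕ} (s : ℕ) (x : ℕ → (Hn n →L[ℂ] Hn n)) (C : ℝ) (hC : 0 ≤ C)
    (hx : ∀ N, ‖x N‖ ≤ C) : ∃ T : Hn (n + 1) →L[ℂ] Hn (n + 1),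
      (∀ k, T (en k) = V n (dg k + s) (x (dg k) (en (Fin.init k)))) ∧ ‖T‖ ≤ C := by
  lift C to ℝ≥0 using hC
  obtain ⟨T, hT, hT'⟩ := exists_ofBound (m := n + 1) (n := n + 1)
    { toFun := fun ξ j => if s ≤ dg j then (x (dg j - s) (Vs n (dg j - s) ξ)) (Fin.init j) else 0
      map_add' := fun a b => by
        ext j; by_cases h : s ≤ dg j <;> simp [h]
      map_smul' := fun a b => by
        ext j; by_cases h : s ≤ dg j <;> simp [h] } C (by
    intro ξ
    simp only [LinearMap.coe_mk, AddHom.coe_mk]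
    have h1 := tsum_ite_le (fun j : Fin (n + 1) → ℕ => s ≤ dg j)
      (fun j => (dg j - s, (Fin.init j : Fin n → ℕ))) (by
        intro a ha b hb hab
        simp only [Prod.mk.injEq, Set.mem_setOf_eq] at ha hb hab
        exact init_dg_inj (by omega) hab.2)
      (fun p => ‖(x p.1 (Vs n p.1 ξ)) p.2‖ₑ ^ 2)
    refine le_trans (le_of_eq ?_) (h1.trans ?_)
    · refine tsum_congr fun j => ?_
      split_ifs <;> simp
    · rw [ENNReal.tsum_prod (f := fun N k => ‖(x N (Vs n N ξ)) k‖ₑ ^ 2)]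
      calc ∑' N, ∑' k, ‖(x N (Vs n N ξ)) k‖ₑ ^ 2 = ∑' N, ‖x N (Vs n N ξ)‖ₑ ^ 2 := by
            simp only [enorm_sq_eq]
        _ ≤ ∑' N, (C : ℝ≥0∞) ^ 2 * ‖Vs n N ξ‖ₑ ^ 2 := by
            refine ENNReal.tsum_le_tsum fun N => ?_
            rw [← mul_pow]
            gcongr
            refine ((x N).le_opENorm _).trans ?_
            gcongr
            rw [← ofReal_norm]
            exact ENNReal.ofReal_le_of_le_toReal (by simpa using hx N)
        _ ≤ _ := by
            rw [ENNReal.tsum_mul_left]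
            gcongr
            exact tsum_Vs ξ)
  refine ⟨T, fun k => ?_, hT'⟩
  ext j
  rw [hT, V_apply]
  simp only [LinearMap.coe_mk, AddHom.coe_mk, Vs_en]
  by_cases h : dg j = dg k + s
  · have h1 : s ≤ dg j := by omega
    have h2 : dg j - s = dg k := by omega
    simp [h1, h2, h]
  · by_cases h1 : s ≤ dg j
    · have h2 : dg k ≠ dg j - s := by omega
      simp [h1, h2, h]
    · simp [h1, h]

/-- The operators `L_s(x) = ∑ V_{N+s} x V_N^*`. -/
def Lo {n : ℕ} (s : ℕ) (x : Hn n →L[ℂ] Hn n) : Hn (n + 1) →L[ℂ] Hn (n + 1) :=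
  (exists_L s (fun _ => x) ‖x‖ (norm_nonneg _) (fun _ => le_rfl)).choose

theorem Lo_en {n : ℕ} (s : ℕ) (x : Hn n →L[ℂ] Hn n) (k : Fin (n + 1) → ℕ) :
    Lo s x (en k) = V n (dg k + s) (x (en (Fin.init k))) :=
  (exists_L s (fun _ => x) ‖x‖ (norm_nonneg _) (fun _ => le_rfl)).choose_spec.1 k

theorem Lo_norm {n : ℕ} (s : ℕ) (x : Hn n →L[ℂ] Hn n) : ‖Lo s x‖ ≤ ‖x‖ :=
  (exists_L s (fun _ => x) ‖x‖ (norm_nonneg _) (fun _ => le_rfl)).choose_spec.2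

theorem Lo_add {n : ℕ} (s : ℕ) (x y : Hn n →L[ℂ] Hn n) : Lo s (x + y) = Lo s x + Lo s y :=
  ext_en fun k => by simp [Lo_en]

theorem Lo_sub {n : ℕ} (s : ℕ) (x y : Hn n →L[ℂ] Hn n) : Lo s (x - y) = Lo s x - Lo s y :=
  ext_en fun k => by simp [Lo_en]

theorem Lo_smul {n : ℕ} (s : ℕ) (c : ℂ) (x : Hn n →L[ℂ] Hn n) : Lo s (c • x) = c • Lo s x :=
  ext_en fun k => by simp [Lo_en]

theorem Lo_zero {n : ℕ} (s : ℕ) : Lo s (0 : Hn n →L[ℂ] Hn n) = 0 :=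
  ext_en fun k => by simp [Lo_en]

theorem Lo_one {n : ℕ} : Lo 0 (1 : Hn n →L[ℂ] Hn n) = 1 :=
  ext_en fun k => by simp [Lo_en, V_en_init]

theorem Lo_continuous {n : ℕ} (s : ℕ) : Continuous (Lo s : (Hn n →L[ℂ] Hn n) → _) := by
  refine LipschitzWith.continuous (K := 1) (LipschitzWith.of_dist_le_mul fun x y => ?_)
  rw [dist_eq_norm, dist_eq_norm, ← Lo_sub]
  simpa using Lo_norm s (x - y)

theorem Lo_star {n : ℕ} (x : Hn n →L[ℂ] Hn n) : star (Lo 0 x) = Lo 0 (star x) := by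
  refine ext_en fun k => ?_
  ext j
  rw [← inner_en j, ContinuousLinearMap.star_eq_adjoint, ContinuousLinearMap.adjoint_inner_right,
    Lo_en, Lo_en, ← inner_conj_symm, inner_en, V_apply, V_apply]
  by_cases h : dg j = dg k
  · simp only [h, add_zero, if_true]
    rw [← inner_en, ← inner_en, inner_conj_symm, ContinuousLinearMap.star_eq_adjoint,
      ContinuousLinearMap.adjoint_inner_right]
  · simp [h, Ne.symm h]

theorem Lo_V {n : ℕ} (s N : ℕ) (x : Hn n →L[ℂ] Hn n) (ξ : Hn n) :
    Lo s x (V n N ξ) = V n (N + s) (x (PN n N ξ)) := by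
  have : Lo s x ∘L V n N = V n (N + s) ∘L x ∘L PN n N := by
    refine ext_en fun k => ?_
    simp only [ContinuousLinearMap.comp_apply, V_en, PN_en]
    split_ifs with h
    · rw [Lo_en, dg_snoc, Fin.init_snoc]
      congr 2
      omega
    · simp
  exact congrArg (fun T => T ξ) this

theorem V_compact_mul {n N : ℕ} (x : Hn n →L[ℂ] Hn n) :
    V n N ∘L x ∘L Vs n N ∈ compactOps (Hn (n + 1)) := by
  have hfin : {k : Fin (n + 1) → ℕ | dg k = N}.Finite := by
    refine Set.Finite.subset (Set.finite_Iic (fun _ : Fin (n + 1) => N)) fun k hk i => ?_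
    rw [← (show dg k = N from hk)]
    exact Finset.single_le_sum (f := k) (fun _ _ => Nat.zero_le _) (Finset.mem_univ i)
  have : V n N ∘L x ∘L Vs n N = (V n N ∘L x ∘L Vs n N) * PF hfin.toFinset := by
    refine ext_en fun k => ?_
    by_cases h : dg k = N
    · simp [Vs_en, PF_en, h]
    · simp [Vs_en, PF_en, h]
  rw [this]
  exact mul_mem_compactOps' (PF_mem _) _

/-- Block-diagonal operators whose blocks tend to zero are compact. -/
theorem block_compact {n : ℕ} (x : ℕ → (Hn n →L[ℂ] Hn n))
    (hx : Tendsto x atTop (𝓝 0)) (T : Hn (n + 1) →L[ℂ] Hn (n + 1))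
    (hT : ∀ k, T (en k) = V n (dg k) (x (dg k) (en (Fin.init k)))) :
    T ∈ compactOps (Hn (n + 1)) := by
  have : Tendsto (fun M => ∑ N ∈ Finset.range M, V n N ∘L x N ∘L Vs n N) atTop (𝓝 T) := by
    rw [Metric.tendsto_atTop]
    intro ε hε
    obtain ⟨M, hM⟩ := Metric.tendsto_atTop.1 hx (ε / 2) (by positivity)
    refine ⟨M, fun M' hM' => ?_⟩
    rw [dist_comm, dist_eq_norm]
    obtain ⟨S, hS, hS'⟩ := exists_L 0 (fun N => if N < M' then 0 else x N) (ε / 2) (by positivity)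
      (fun N => by
        split_ifs with h
        · simp; positivity
        · have := hM N (by omega)
          rw [dist_zero_right] at this
          exact this.le)
    have : T - ∑ N ∈ Finset.range M', V n N ∘L x N ∘L Vs n N = S := by
      refine ext_en fun k => ?_
      rw [hS]
      simp only [ContinuousLinearMap.sub_apply, hT, ContinuousLinearMap.sum_apply,
        ContinuousLinearMap.comp_apply, Vs_en, add_zero]
      by_cases h : dg k < M'
      · rw [Finset.sum_eq_single (dg k)]
        · simp [h]
        · intro b _ hb
          simp [hb.symm]
        · simp [h]
      · rw [Finset.sum_eq_zero]
        · simp [h]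
        · intro N hN
          have : dg k ≠ N := by rw [Finset.mem_range] at hN; omega
          simp [this]
    rw [this]
    linarith
  exact (isClosed_compactOps _).mem_of_tendsto this
    (Eventually.of_forall fun M => sum_mem fun N _ => V_compact_mul _)

/-- Operators asymptotically commuting with the projections `PN`. -/
def QD {n : ℕ} (b : Hn n →L[ℂ] Hn n) : Prop :=
  Tendsto (fun N => PN n N * b - b * PN n N) atTop (𝓝 0)

theorem PN_tendsto {n : ℕ} (ξ : Hn n) :
    Tendsto (fun N => (1 - PN n N : Hn n →L[ℂ] Hn n) ξ) atTop (𝓝 0) := by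
  let S : Submodule ℂ (Hn n) :=
    { carrier := {ξ | Tendsto (fun N => (1 - PN n N : Hn n →L[ℂ] Hn n) ξ) atTop (𝓝 0)}
      add_mem' := fun {a b} ha hb => by
        simp only [Set.mem_setOf_eq, map_add] at *
        simpa using ha.add hb
      zero_mem' := by simp
      smul_mem' := fun c a ha => by
        simp only [Set.mem_setOf_eq, map_smul] at *
        simpa using ha.const_smul c }
  have hS : IsClosed (S : Set (Hn n)) :=
    isClosed_tendsto atTop (fun N => ((1 - PN n N : Hn n →L[ℂ] Hn n) : Hn n →ₗ[ℂ] Hn n)) 1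
      (fun N x => (ContinuousLinearMap.le_opNorm _ _).trans (by
        gcongr; exact one_sub_PN_norm n N))
  refine mem_of_en S hS (fun k => ?_) ξ
  refine tendsto_const_nhds.congr' ?_
  filter_upwards [eventually_ge_atTop (dg k)] with N hN
  simp [PN_en, hN]

theorem QD_compact {n : ℕ} {b : Hn n →L[ℂ] Hn n} (hb : b ∈ compactOps (Hn n)) : QD b := by
  have h1 := tendsto_comp_compact atTop (fun N => 1 - PN n N) 1
    (one_sub_PN_norm n) PN_tendsto b hb.1
  have h2 := tendsto_comp_compact atTop (fun N => 1 - PN n N) 1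
    (one_sub_PN_norm n) PN_tendsto (star b) hb.2
  have h3 : Tendsto (fun N => b * (1 - PN n N)) atTop (𝓝 0) := by
    have := (continuous_star.tendsto _).comp h2
    simpa [Function.comp_def, PN_star] using this
  have := h3.sub h1
  rw [sub_zero] at this
  refine this.congr fun N => ?_
  noncomm_ring

theorem QD_algebraMap {n : ℕ} (c : ℂ) : QD (algebraMap ℂ (Hn n →L[ℂ] Hn n) c) := by
  refine tendsto_const_nhds.congr fun N => ?_
  rw [Algebra.commutes, sub_self]

theorem QD_add {n : ℕ} {a b : Hn n →L[ℂ] Hn n} (ha : QD a) (hb : QD b) : QD (a + b) := by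
  have := Tendsto.add ha hb
  rw [add_zero] at this
  refine this.congr fun N => ?_
  noncomm_ring

theorem QD_mul {n : ℕ} {a b : Hn n →L[ℂ] Hn n} (ha : QD a) (hb : QD b) : QD (a * b) := by
  have := (Tendsto.mul_const b ha).add (Tendsto.const_mul a hb)
  simp only [zero_mul, mul_zero, add_zero] at this
  refine this.congr fun N => ?_
  noncomm_ring

theorem QD_star {n : ℕ} {a : Hn n →L[ℂ] Hn n} (ha : QD a) : QD (star a) := by
  have := ((continuous_star.tendsto _).comp ha).neg
  simp only [star_zero, neg_zero] at this
  refine this.congr fun N => ?_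
  simp [PN_star]

theorem QD_closed (n : ℕ) : IsClosed {a : Hn n →L[ℂ] Hn n | QD a} :=
  isClosed_tendsto atTop (fun N =>
    (LinearMap.mulLeft ℂ (PN n N) - LinearMap.mulRight ℂ (PN n N))) 2 (fun N x => by
      simp only [LinearMap.sub_apply, LinearMap.mulLeft_apply, LinearMap.mulRight_apply]
      refine (norm_sub_le _ _).trans ?_
      have h1 : ‖PN n N * x‖ ≤ 1 * ‖x‖ := (norm_mul_le _ _).trans (by gcongr; exact PN_norm n N)
      have h2 : ‖x * PN n N‖ ≤ ‖x‖ * 1 := (norm_mul_le _ _).trans (by gcongr; exact PN_norm n N)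
      linarith)

theorem Lo_mul {n : ℕ} (a : Hn n →L[ℂ] Hn n) {b : Hn n →L[ℂ] Hn n} (hb : QD b) :
    Lo 0 a * Lo 0 b - Lo 0 (a * b) ∈ compactOps (Hn (n + 1)) := by
  refine block_compact (fun N => a * (PN n N * b - b * PN n N)) ?_ _ fun k => ?_
  · simpa using Tendsto.const_mul a hb
  · have h : dg (Fin.init k) ≤ dg k := by rw [dg_succ k]; omega
    simp [Lo_en, Lo_V, PN_en, h]

theorem compact_V {n : ℕ} {κ : Hn (n + 1) →L[ℂ] Hn (n + 1)} (hκ : κ ∈ compactOps (Hn (n + 1)))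
    (ξ : Hn n) : Tendsto (fun N => κ (V n N ξ)) atTop (𝓝 0) := by
  let S : Submodule ℂ (Hn (n + 1) →L[ℂ] Hn (n + 1)) :=
    { carrier := {κ | Tendsto (fun N => κ (V n N ξ)) atTop (𝓝 0)}
      add_mem' := fun {a b} ha hb => by
        simp only [Set.mem_setOf_eq, ContinuousLinearMap.add_apply] at *
        simpa using ha.add hb
      zero_mem' := by simp
      smul_mem' := fun c a ha => by
        simp only [Set.mem_setOf_eq, ContinuousLinearMap.smul_apply] at *
        simpa using ha.const_smul c }
  have hS : IsClosed (S : Set (Hn (n + 1) →L[ℂ] Hn (n + 1))) :=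
    isClosed_tendsto atTop (fun N =>
      { toFun := fun κ : Hn (n + 1) →L[ℂ] Hn (n + 1) => κ (V n N ξ)
        map_add' := fun _ _ => rfl
        map_smul' := fun _ _ => rfl }) ‖ξ‖
      (fun N x => by
        simp only [LinearMap.coe_mk, AddHom.coe_mk]
        refine (ContinuousLinearMap.le_opNorm _ _).trans ?_
        rw [mul_comm]
        gcongr
        refine (ContinuousLinearMap.le_opNorm _ _).trans ?_
        have := V_norm n N
        nlinarith [norm_nonneg ξ])
  refine compactOps_mem_of_closed S hS (fun j k => ?_) κ hκ
  refine tendsto_const_nhds.congr' ?_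
  filter_upwards [eventually_gt_atTop (dg k)] with N hN
  rw [InnerProductSpace.rankOne_apply, inner_en, V_apply, if_neg (by omega), zero_smul]

theorem norm_le_of_compact {n : ℕ} (y : Hn (n + 1) →L[ℂ] Hn (n + 1)) (y' : Hn n →L[ℂ] Hn n)
    (h : y - Lo 0 y' ∈ compactOps (Hn (n + 1))) : ‖y'‖ ≤ ‖y‖ := by
  refine ContinuousLinearMap.opNorm_le_bound _ (norm_nonneg _) fun ξ => ?_
  have h1 : Tendsto (fun N => PN n N ξ) atTop (𝓝 ξ) := by
    simpa using (tendsto_const_nhds (x := ξ)).sub (PN_tendsto ξ)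
  have h2 : Tendsto (fun N => y' (PN n N ξ)) atTop (𝓝 (y' ξ)) := (y'.continuous.tendsto _).comp h1
  have h3 : Tendsto (fun N => PN n N (y' (PN n N ξ))) atTop (𝓝 (y' ξ)) := by
    have e : Tendsto (fun N => PN n N (y' (PN n N ξ) - y' ξ)) atTop (𝓝 0) := by
      refine squeeze_zero_norm (a := fun N => ‖y' (PN n N ξ) - y' ξ‖) (fun N => ?_) ?_
      · refine (ContinuousLinearMap.le_opNorm _ _).trans ?_
        have := PN_norm n N
        nlinarith [norm_nonneg (y' (PN n N ξ) - y' ξ)]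
      · simpa using (h2.sub_const (y' ξ)).norm
    have e2 : Tendsto (fun N => PN n N (y' ξ)) atTop (𝓝 (y' ξ)) := by
      simpa using (tendsto_const_nhds (x := y' ξ)).sub (PN_tendsto (y' ξ))
    simpa using e.add e2
  have h4 := (compact_V h ξ).norm
  have h5 : ∀ N, ‖PN n N (y' (PN n N ξ))‖ ≤ ‖y‖ * ‖ξ‖ + ‖(y - Lo 0 y') (V n N ξ)‖ := by
    intro N
    have e1 : PN n N (y' (PN n N ξ)) = Vs n N (Lo 0 y' (V n N ξ)) := by
      rw [Lo_V]; rfl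
    have e2 : Lo 0 y' (V n N ξ) = y (V n N ξ) - (y - Lo 0 y') (V n N ξ) := by simp
    rw [e1]
    calc ‖Vs n N (Lo 0 y' (V n N ξ))‖ ≤ 1 * ‖Lo 0 y' (V n N ξ)‖ :=
          (ContinuousLinearMap.le_opNorm _ _).trans (by gcongr; exact Vs_norm n N)
      _ ≤ ‖y (V n N ξ)‖ + ‖(y - Lo 0 y') (V n N ξ)‖ := by
          rw [one_mul, e2]; exact norm_sub_le _ _
      _ ≤ _ := by
          gcongr
          refine (ContinuousLinearMap.le_opNorm _ _).trans ?_
          gcongr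
          refine (ContinuousLinearMap.le_opNorm _ _).trans ?_
          have := V_norm n N
          nlinarith [norm_nonneg ξ]
  have h6 : Tendsto (fun N => ‖y‖ * ‖ξ‖ + ‖(y - Lo 0 y') (V n N ξ)‖) atTop (𝓝 (‖y‖ * ‖ξ‖)) := by
    simpa using (tendsto_const_nhds (x := ‖y‖ * ‖ξ‖)).add h4
  exact le_of_tendsto_of_tendsto' h3.norm h6 h5
theorem hn_real_smul {n : ℕ} (r : ℝ) (x : Hn n) : r • x = (r : ℂ) • x := by
  ext k
  rw [lp.coeFn_smul, lp.coeFn_smul, Pi.smul_apply, Pi.smul_apply]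
  simp

theorem clm_real_smul {m n : ℕ} (T : Hn m →L[ℂ] Hn n) (r : ℝ) (x : Hn m) :
    T (r • x) = r • T x := by
  rw [hn_real_smul, map_smul, hn_real_smul]

theorem gen_mem {n : ℕ} (w : Fin (n + 1) → (Hn n →L[ℂ] Hn n)) (i j : Fin (n + 1)) :
    star (w i) * w j ∈ projAlg w :=
  StarSubalgebra.le_topologicalClosure _ (StarAlgebra.subset_adjoin ℂ _ ⟨i, j, rfl⟩)

theorem projAlg_closed {n : ℕ} (w : Fin (n + 1) → (Hn n →L[ℂ] Hn n)) :
    IsClosed (projAlg w : Set (Hn n →L[ℂ] Hn n)) :=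
  StarSubalgebra.isClosed_topologicalClosure _

theorem projAlg_induction {n : ℕ} {w : Fin (n + 1) → (Hn n →L[ℂ] Hn n)}
    {p : (Hn n →L[ℂ] Hn n) → Prop} (hcl : IsClosed {x | p x})
    (hgen : ∀ i j, p (star (w i) * w j)) (halg : ∀ c, p (algebraMap ℂ _ c))
    (hadd : ∀ x y, p x → p y → p (x + y))
    (hmul : ∀ x y, x ∈ projAlg w → y ∈ projAlg w → p x → p y → p (x * y))
    (hstar : ∀ x, p x → p (star x)) {x : Hn n →L[ℂ] Hn n} (hx : x ∈ projAlg w) : p x := by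
  refine closure_minimal (fun y hy => ?_) hcl hx
  refine StarAlgebra.adjoin_induction (p := fun y _ => p y) ?_ halg
    (fun x y _ _ => hadd x y)
    (fun x y hx hy => hmul x y (StarSubalgebra.le_topologicalClosure _ hx)
      (StarSubalgebra.le_topologicalClosure _ hy)) (fun x _ => hstar x) hy
  rintro x ⟨i, j, rfl⟩
  exact hgen i j

/-- The coefficients of the weighted shifts. -/
def wc (q : ℝ) {n : ℕ} (j : Fin n) (k : Fin n → ℕ) : ℝ :=
  (q ^ (-(∑ m ∈ Finset.univ.filter (fun m : Fin n => (m : ℕ) < n - 1 - (j : ℕ)), (k m : ℤ)))) *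
    Real.sqrt (1 - q ^ (-2 * ((k (shiftIdx j) : ℤ) + 1)))

/-- The shift of multi-indices. -/
def sh {n : ℕ} (i : Fin n) (k : Fin n → ℕ) : Fin n → ℕ := Function.update k i (k i + 1)

theorem sh_inj {n : ℕ} (i : Fin n) : Function.Injective (sh i) := by
  intro a b h
  ext m
  have h1 := congrFun h m
  by_cases hm : m = i
  · subst hm; simpa [sh] using h1
  · simpa [sh, hm] using h1

theorem dg_sh {n : ℕ} (i : Fin n) (k : Fin n → ℕ) : dg (sh i k) = dg k + 1 := by
  unfold dg sh
  rw [Finset.sum_update_of_mem (Finset.mem_univ i), ← Finset.add_sum_erase _ _ (Finset.mem_univ i),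
    Finset.sdiff_singleton_eq_erase]
  ring

theorem w_zero {q : ℝ} {n : ℕ} {w : Fin (n + 1) → (Hn n →L[ℂ] Hn n)} (hw : IsWFamily q w)
    (k : Fin n → ℕ) : w 0 (en k) = ((q⁻¹) ^ (dg k)) • en k := by
  rw [hw.1 k]
  congr 1
  rw [zpow_neg, inv_pow, ← zpow_natCast]
  simp [dg]

theorem w_succ {q : ℝ} {n : ℕ} {w : Fin (n + 1) → (Hn n →L[ℂ] Hn n)} (hw : IsWFamily q w)
    (j : Fin n) (k : Fin n → ℕ) : w j.succ (en k) = wc q j k • en (sh (shiftIdx j) k) := hw.2 j k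

theorem sqrt_arg {q : ℝ} (hq : 1 < q) (m : ℕ) : q ^ (-2 * ((m : ℤ) + 1)) = (q⁻¹) ^ (2 * (m + 1)) ∧
    0 < (q⁻¹) ^ (2 * (m + 1)) ∧ (q⁻¹) ^ (2 * (m + 1)) < 1 := by
  have h0 : 0 < q⁻¹ := by positivity
  have h1 : q⁻¹ < 1 := inv_lt_one_of_one_lt₀ hq
  refine ⟨?_, by positivity, pow_lt_one₀ h0.le h1 (by omega)⟩
  rw [inv_pow, ← zpow_natCast, ← zpow_neg]
  congr 1

theorem wc_pos {q : ℝ} (hq : 1 < q) {n : ℕ} (j : Fin n) (k : Fin n → ℕ) : 0 < wc q j k := by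
  obtain ⟨h1, h2, h3⟩ := sqrt_arg hq (k (shiftIdx j))
  unfold wc
  rw [h1]
  have : 0 < 1 - (q⁻¹) ^ (2 * (k (shiftIdx j) + 1)) := by linarith
  positivity

theorem wc_le {q : ℝ} (hq : 1 < q) {n : ℕ} (j : Fin n) (k : Fin n → ℕ) : wc q j k ≤ 1 := by
  obtain ⟨h1, h2, h3⟩ := sqrt_arg hq (k (shiftIdx j))
  unfold wc
  rw [h1]
  refine mul_le_one₀ ?_ (Real.sqrt_nonneg _) (Real.sqrt_le_one.2 (by linarith))
  refine zpow_le_one_of_nonpos₀ hq.le ?_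
  simp only [Left.neg_nonpos_iff]
  exact Finset.sum_nonneg fun i _ => by positivity

theorem exists_WFamily {q : ℝ} (hq : 1 < q) (n : ℕ) :
    ∃ w : Fin (n + 1) → (Hn n →L[ℂ] Hn n), IsWFamily q w := by
  have h0 := exists_wshift (m := n) (n := n) id Function.injective_id
    (fun k => (q ^ (-(∑ m, (k m : ℤ))))) 1 (fun k => by
      rw [abs_of_pos (by positivity)]
      refine zpow_le_one_of_nonpos₀ hq.le ?_
      simp only [Left.neg_nonpos_iff]
      exact Finset.sum_nonneg fun i _ => by positivity)
  have h1 : ∀ j : Fin n, ∃ T : Hn n →L[ℂ] Hn n,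
      ∀ k, T (en k) = wc q j k • en (sh (shiftIdx j) k) := fun j => by
    obtain ⟨T, hT, -⟩ := exists_wshift (m := n) (n := n) (sh (shiftIdx j)) (sh_inj _)
      (wc q j) 1 (fun k => by
        rw [abs_of_pos (wc_pos hq j k)]
        exact wc_le hq j k)
    exact ⟨T, hT⟩
  obtain ⟨T0, hT0, -⟩ := h0
  choose T hT using h1
  exact ⟨Fin.cons T0 T, fun k => by simpa using hT0 k, fun j k => by rw [Fin.cons_succ]; exact hT j k⟩

theorem dg_tendsto (n : ℕ) : Tendsto (dg : (Fin n → ℕ) → ℕ) cofinite atTop := by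
  rw [tendsto_atTop]
  intro N
  rw [eventually_cofinite]
  refine Set.Finite.subset (Set.finite_Iic (fun _ : Fin n => N)) fun k hk i => ?_
  have h1 : dg k ≤ N := by
    have : ¬ N ≤ dg k := hk
    omega
  refine le_trans ?_ h1
  exact Finset.single_le_sum (f := k) (fun _ _ => Nat.zero_le _) (Finset.mem_univ i)

theorem pow_dg_tendsto {q : ℝ} (hq : 1 < q) (n : ℕ) :
    Tendsto (fun k : Fin n → ℕ => (q⁻¹) ^ (dg k)) cofinite (𝓝 0) :=
  (tendsto_pow_atTop_nhds_zero_of_lt_one (by positivity) (inv_lt_one_of_one_lt₀ hq)).comp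
    (dg_tendsto n)

theorem w_zero_compact {q : ℝ} (hq : 1 < q) {n : ℕ} {w : Fin (n + 1) → (Hn n →L[ℂ] Hn n)}
    (hw : IsWFamily q w) : w 0 ∈ compactOps (Hn n) :=
  wshift_compact id Function.injective_id _ (pow_dg_tendsto hq n) _ (w_zero hw)

theorem w_zero_star {q : ℝ} {n : ℕ} {w : Fin (n + 1) → (Hn n →L[ℂ] Hn n)}
    (hw : IsWFamily q w) : star (w 0) = w 0 := by
  refine ext_en fun k => ?_
  ext j
  rw [← inner_en j, ContinuousLinearMap.star_eq_adjoint, ContinuousLinearMap.adjoint_inner_right,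
    w_zero hw, w_zero hw, ← inner_conj_symm, inner_en]
  by_cases h : j = k
  · subst h; simp [en_apply]
  · simp [en_apply, h, Ne.symm h]

theorem dg_eq_zero {n : ℕ} (k : Fin n → ℕ) : dg k = 0 ↔ k = 0 := by
  simp [dg, funext_iff]

open InnerProductSpace in
theorem rankOne_zero_mem {q : ℝ} (hq : 1 < q) {n : ℕ} {w : Fin (n + 1) → (Hn n →L[ℂ] Hn n)}
    (hw : IsWFamily q w) : rankOne ℂ (en (0 : Fin n → ℕ)) (en 0) ∈ projAlg w := by
  have h0 : 0 < q⁻¹ := by positivity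
  have h1 : q⁻¹ < 1 := inv_lt_one_of_one_lt₀ hq
  have hG : ∀ k, (star (w 0) * w 0) (en k) = ((q⁻¹) ^ (2 * dg k)) • en k := by
    intro k
    rw [w_zero_star hw, ContinuousLinearMap.mul_apply, w_zero hw, clm_real_smul, w_zero hw,
      smul_smul, ← pow_add, two_mul]
  have hGm : ∀ m k, ((star (w 0) * w 0) ^ m) (en k) = ((q⁻¹) ^ (2 * dg k * m)) • en k := by
    intro m k
    induction m with
    | zero => simp
    | succ m ih =>
      rw [pow_succ', ContinuousLinearMap.mul_apply, ih]
      simp only [clm_real_smul, hG, smul_smul]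
      congr 1
      ring
  have : Tendsto (fun m => (star (w 0) * w 0) ^ m) atTop
      (𝓝 (rankOne ℂ (en (0 : Fin n → ℕ)) (en 0))) := by
    rw [tendsto_iff_norm_sub_tendsto_zero]
    refine squeeze_zero (g := fun m => (q⁻¹) ^ m) (fun _ => norm_nonneg _) (fun m => ?_)
      (tendsto_pow_atTop_nhds_zero_of_lt_one h0.le h1)
    refine wshift_norm_le id Function.injective_id
      (fun k => if k = 0 then 0 else (q⁻¹) ^ (2 * dg k * m)) _ (by positivity) (fun k => ?_) _
      (fun k => ?_)
    · split_ifs with hk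
      · simp; positivity
      · rw [abs_of_pos (by positivity)]
        refine pow_le_pow_of_le_one h0.le h1.le ?_
        have : dg k ≠ 0 := fun h => hk ((dg_eq_zero k).1 h)
        have : 1 ≤ 2 * dg k := by omega
        nlinarith
    · rw [ContinuousLinearMap.sub_apply, hGm, rankOne_apply, inner_en, en_apply]
      by_cases hk : k = 0
      · subst hk
        simp [(dg_eq_zero (0 : Fin n → ℕ)).2 rfl]
      · simp [hk, Ne.symm hk]
  exact (projAlg_closed w).mem_of_tendsto this
    (Eventually.of_forall fun m => pow_mem (gen_mem w 0 0) m)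

theorem exists_raise {q : ℝ} (hq : 1 < q) {n : ℕ} {w : Fin (n + 1) → (Hn n →L[ℂ] Hn n)}
    (hw : IsWFamily q w) (N : ℕ) : ∀ k : Fin n → ℕ, dg k = N →
    ∃ b ∈ projAlg w, ∃ c : ℂ, c ≠ 0 ∧ b (en 0) = c • en k := by
  induction N with
  | zero =>
    intro k hk
    rw [dg_eq_zero] at hk
    subst hk
    exact ⟨1, one_mem _, 1, one_ne_zero, by simp⟩
  | succ N ih =>
    intro k hk
    have : ∃ m, k m ≠ 0 := by
      by_contra! h
      have : dg k = 0 := (dg_eq_zero k).2 (funext h)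
      omega
    obtain ⟨m, hm⟩ := this
    set k0 := Function.update k m (k m - 1) with hk0
    have hsh : sh m k0 = k := by
      simp only [sh, hk0, Function.update_self, Function.update_idem]
      rw [show k m - 1 + 1 = k m by omega, Function.update_eq_self]
    have hd : dg k0 = N := by
      have := dg_sh m k0
      rw [hsh] at this
      omega
    obtain ⟨b, hb, c, hc, hbc⟩ := ih k0 hd
    let j : Fin n := ⟨n - 1 - m, by have := m.2; omega⟩
    have hj : shiftIdx j = m := by
      ext
      simp only [shiftIdx, j]
      have := m.2
      omega
    refine ⟨(star (w 0) * w j.succ) * b, mul_mem (gen_mem w _ _) hb,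
      c * ((wc q j k0 : ℝ) * ((q⁻¹ : ℝ) ^ dg k : ℝ)), ?_, ?_⟩
    · have h1 := (wc_pos hq j k0).ne'
      have h2 : ((q⁻¹ : ℝ) ^ dg k : ℝ) ≠ 0 := by positivity
      refine mul_ne_zero hc (mul_ne_zero (by exact_mod_cast h1) (by exact_mod_cast h2))
    · rw [ContinuousLinearMap.mul_apply, hbc, w_zero_star hw, map_smul,
        ContinuousLinearMap.mul_apply, w_succ hw, hj, hsh, clm_real_smul, w_zero hw]
      simp only [mul_smul, hn_real_smul]

open InnerProductSpace in
theorem compact_mem {q : ℝ} (hq : 1 < q) {n : ℕ} {w : Fin (n + 1) → (Hn n →L[ℂ] Hn n)}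
    (hw : IsWFamily q w) {T : Hn n →L[ℂ] Hn n} (hT : T ∈ compactOps (Hn n)) : T ∈ projAlg w := by
  refine compactOps_mem_of_closed (Subalgebra.toSubmodule (projAlg w).toSubalgebra)
    (projAlg_closed w) (fun j k => ?_) T hT
  obtain ⟨b, hb, c, hc, hbc⟩ := exists_raise hq hw _ j rfl
  obtain ⟨b', hb', c', hc', hbc'⟩ := exists_raise hq hw _ k rfl
  have h1 : b * rankOne ℂ (en (0 : Fin n → ℕ)) (en 0) * star b' ∈ projAlg w :=
    mul_mem (mul_mem hb (rankOne_zero_mem hq hw)) (star_mem hb')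
  have h2 : b * rankOne ℂ (en (0 : Fin n → ℕ)) (en 0) * star b' =
      (c * conj c') • rankOne ℂ (en j) (en k) := by
    ext1 ξ
    simp only [ContinuousLinearMap.mul_apply, rankOne_apply, ContinuousLinearMap.smul_apply,
      ContinuousLinearMap.star_eq_adjoint, ContinuousLinearMap.adjoint_inner_right, map_smul, hbc,
      hbc', inner_smul_left, smul_smul]
    congr 1
    ring
  rw [h2] at h1
  have h3 := (projAlg w).smul_mem h1 (c * conj c')⁻¹
  rw [smul_smul, inv_mul_cancel₀ (mul_ne_zero hc (by simpa using hc')), one_smul] at h3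
  exact h3

theorem wc_castSucc (q : ℝ) {n : ℕ} (j : Fin n) (k : Fin (n + 1) → ℕ) :
    shiftIdx j.succ = (shiftIdx j).castSucc ∧ wc q j.succ k = wc q j (Fin.init k) := by
  have h1 : shiftIdx j.succ = (shiftIdx j).castSucc := by
    ext
    simp only [shiftIdx, Fin.val_succ, Fin.val_castSucc]
    omega
  refine ⟨h1, ?_⟩
  unfold wc
  rw [h1]
  have h2 : ∑ m ∈ Finset.univ.filter (fun m : Fin (n + 1) => (m : ℕ) < n + 1 - 1 - (j.succ : ℕ)),
      (k m : ℤ) = ∑ m ∈ Finset.univ.filter (fun m : Fin n => (m : ℕ) < n - 1 - (j : ℕ)),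
      (Fin.init k m : ℤ) := by
    rw [Finset.sum_filter, Finset.sum_filter, Fin.sum_univ_castSucc, if_neg, add_zero]
    · refine Finset.sum_congr rfl fun m _ => ?_
      have : ((m.castSucc : ℕ) < n + 1 - 1 - (j.succ : ℕ)) ↔ (m : ℕ) < n - 1 - (j : ℕ) := by
        simp only [Fin.val_succ, Fin.val_castSucc]
        omega
      simp only [this]
      rfl
    · simp only [Fin.val_last, Fin.val_succ]
      omega
  rw [h2]
  rfl

theorem init_sh_castSucc {n : ℕ} (i : Fin n) (k : Fin (n + 1) → ℕ) :
    Fin.init (sh i.castSucc k) = sh i (Fin.init k) := by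
  ext m
  simp [sh, Fin.init, Function.update_apply]

theorem init_sh_last {n : ℕ} (k : Fin (n + 1) → ℕ) :
    Fin.init (sh (Fin.last n) k) = Fin.init k := by
  ext m
  simp [sh, Fin.init, Function.update_apply, (Fin.castSucc_lt_last m).ne]

theorem w_succ_succ {q : ℝ} {n : ℕ} {w : Fin (n + 2) → (Hn (n + 1) →L[ℂ] Hn (n + 1))}
    (hw : IsWFamily q w) {w' : Fin (n + 1) → (Hn n →L[ℂ] Hn n)} (hw' : IsWFamily q w')
    (j : Fin n) : w j.succ.succ = Lo 1 (w' j.succ) := by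
  refine ext_en fun k => ?_
  obtain ⟨h1, h2⟩ := wc_castSucc q j k
  rw [w_succ hw, h1, h2, Lo_en, w_succ hw', clm_real_smul, ← init_sh_castSucc,
    ← dg_sh (shiftIdx j).castSucc k, V_en_init]

theorem shiftIdx_zero (n : ℕ) : shiftIdx (0 : Fin (n + 1)) = Fin.last n := by
  ext; simp [shiftIdx]

theorem wc_zero {q : ℝ} (hq : 1 < q) {n : ℕ} (k : Fin (n + 1) → ℕ) :
    wc q 0 k = (q⁻¹) ^ dg (Fin.init k) * Real.sqrt (1 - (q⁻¹) ^ (2 * (k (Fin.last n) + 1))) := by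
  unfold wc
  rw [shiftIdx_zero, (sqrt_arg hq _).1]
  congr 1
  rw [Finset.sum_filter, Fin.sum_univ_castSucc, if_neg (by simp), add_zero, zpow_neg, inv_pow,
    ← zpow_natCast]
  congr 2
  simp [dg, Fin.init]

theorem w_one_compact {q : ℝ} (hq : 1 < q) {n : ℕ}
    {w : Fin (n + 2) → (Hn (n + 1) →L[ℂ] Hn (n + 1))}
    (hw : IsWFamily q w) {w' : Fin (n + 1) → (Hn n →L[ℂ] Hn n)} (hw' : IsWFamily q w') :
    w (0 : Fin (n + 1)).succ - Lo 1 (w' 0) ∈ compactOps (Hn (n + 1)) := by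
  have h0 : 0 < q⁻¹ := by positivity
  have h1 : q⁻¹ < 1 := inv_lt_one_of_one_lt₀ hq
  refine wshift_compact (sh (Fin.last n)) (sh_inj _)
    (fun k => wc q 0 k - (q⁻¹) ^ dg (Fin.init k)) ?_ _ fun k => ?_
  · refine squeeze_zero_norm (fun k => ?_) (pow_dg_tendsto hq (n + 1))
    obtain ⟨-, h2, h3⟩ := sqrt_arg hq (k (Fin.last n))
    rw [wc_zero hq, ← mul_sub_one, norm_mul, Real.norm_of_nonneg (by positivity), dg_succ k,
      pow_add]
    refine mul_le_mul_of_nonneg_left ?_ (by positivity)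
    set t := (q⁻¹) ^ (2 * (k (Fin.last n) + 1)) with ht
    have h4 : t ≤ (q⁻¹) ^ (k (Fin.last n)) := pow_le_pow_of_le_one h0.le h1.le (by omega)
    have h5 : 1 - t ≤ Real.sqrt (1 - t) := Real.le_sqrt_of_sq_le (by nlinarith)
    have h6 : Real.sqrt (1 - t) ≤ 1 := Real.sqrt_le_one.2 (by linarith)
    rw [Real.norm_eq_abs, abs_sub_comm, abs_of_nonneg (by linarith)]
    linarith
  · rw [ContinuousLinearMap.sub_apply, w_succ hw, Lo_en, w_zero hw', clm_real_smul, shiftIdx_zero,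
      sub_smul, ← init_sh_last k, ← dg_sh (Fin.last n) k, V_en_init]

theorem w_succ_compact {q : ℝ} (hq : 1 < q) {n : ℕ}
    {w : Fin (n + 2) → (Hn (n + 1) →L[ℂ] Hn (n + 1))}
    (hw : IsWFamily q w) {w' : Fin (n + 1) → (Hn n →L[ℂ] Hn n)} (hw' : IsWFamily q w')
    (i : Fin (n + 1)) : w i.succ - Lo 1 (w' i) ∈ compactOps (Hn (n + 1)) := by
  induction i using Fin.cases with
  | zero => exact w_one_compact hq hw hw'
  | succ j => rw [w_succ_succ hw hw', sub_self]; exact zero_mem _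

theorem PN_w {q : ℝ} {n : ℕ} {w' : Fin (n + 1) → (Hn n →L[ℂ] Hn n)} (hw' : IsWFamily q w')
    (i : Fin (n + 1)) (M : ℕ) (k : Fin n → ℕ) (hk : dg k ≤ M) :
    PN n (M + 1) (w' i (en k)) = w' i (en k) := by
  induction i using Fin.cases with
  | zero => rw [w_zero hw', clm_real_smul, PN_en, if_pos (by omega)]
  | succ j => rw [w_succ hw', clm_real_smul, PN_en, if_pos (by rw [dg_sh]; omega)]

theorem inner_V {n N M : ℕ} (ξ η : Hn n) :
    inner ℂ (V n N ξ) (V n M η) = if N = M then inner ℂ (PN n N ξ) η else 0 := by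
  rw [← ContinuousLinearMap.adjoint_inner_right]
  change inner ℂ ξ (Vs n N (V n M η)) = _
  split_ifs with h
  · subst h
    rw [← PN_star, ContinuousLinearMap.star_eq_adjoint, ContinuousLinearMap.adjoint_inner_left]
    rfl
  · rw [Vs_V_ne h, inner_zero_right]

theorem Lo_one_star {n : ℕ} {a : Hn n →L[ℂ] Hn n}
    (ha : ∀ M k, dg k ≤ M → PN n (M + 1) (a (en k)) = a (en k)) (N : ℕ) (ξ : Hn n) :
    star (Lo 1 a) (V n (N + 1) ξ) = V n N (star a ξ) := by
  ext k
  rw [← inner_en k, ContinuousLinearMap.star_eq_adjoint, ContinuousLinearMap.adjoint_inner_right,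
    Lo_en, inner_V, V_apply, ha _ _ (by rw [dg_succ k]; omega), ← inner_en,
    ContinuousLinearMap.star_eq_adjoint, ContinuousLinearMap.adjoint_inner_right]
  simp

theorem Lo_one_mul {n : ℕ} {a : Hn n →L[ℂ] Hn n}
    (ha : ∀ M k, dg k ≤ M → PN n (M + 1) (a (en k)) = a (en k)) (b : Hn n →L[ℂ] Hn n) :
    star (Lo 1 a) * Lo 1 b = Lo 0 (star a * b) := by
  refine ext_en fun k => ?_
  rw [ContinuousLinearMap.mul_apply, Lo_en, Lo_one_star ha, Lo_en]
  rfl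

theorem gen_zero {q : ℝ} (hq : 1 < q) {n : ℕ} {w : Fin (n + 1) → (Hn n →L[ℂ] Hn n)}
    (hw : IsWFamily q w) {i j : Fin (n + 1)} (h : i = 0 ∨ j = 0) :
    star (w i) * w j ∈ compactOps (Hn n) := by
  rcases h with rfl | rfl
  · rw [w_zero_star hw]
    exact mul_mem_compactOps (w_zero_compact hq hw) _
  · exact mul_mem_compactOps' (w_zero_compact hq hw) _

theorem gen_succ {q : ℝ} (hq : 1 < q) {n : ℕ}
    {w : Fin (n + 2) → (Hn (n + 1) →L[ℂ] Hn (n + 1))}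
    (hw : IsWFamily q w) {w' : Fin (n + 1) → (Hn n →L[ℂ] Hn n)} (hw' : IsWFamily q w')
    (i j : Fin (n + 1)) :
    star (w i.succ) * w j.succ - Lo 0 (star (w' i) * w' j) ∈ compactOps (Hn (n + 1)) := by
  have hi := star_mem (w_succ_compact hq hw hw' i)
  have hj := w_succ_compact hq hw hw' j
  rw [← Lo_one_mul (PN_w hw' i)]
  have : star (w i.succ) * w j.succ - star (Lo 1 (w' i)) * Lo 1 (w' j) =
      star (w i.succ - Lo 1 (w' i)) * w j.succ
        + star (Lo 1 (w' i)) * (w j.succ - Lo 1 (w' j)) := by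
    rw [star_sub]; noncomm_ring
  rw [this]
  exact add_mem (mul_mem_compactOps hi _) (mul_mem_compactOps' hj _)

theorem PN_comm {q : ℝ} {n : ℕ} {w : Fin (n + 1) → (Hn n →L[ℂ] Hn n)}
    (hw : IsWFamily q w) (j : Fin n) (N : ℕ) :
    PN n (N + 1) * w j.succ = w j.succ * PN n N := by
  refine ext_en fun k => ?_
  rw [ContinuousLinearMap.mul_apply, ContinuousLinearMap.mul_apply, PN_en, w_succ hw,
    clm_real_smul, PN_en, dg_sh]
  by_cases h : dg k ≤ N
  · simp only [h, add_le_add_iff_right, if_true, w_succ hw]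
  · simp [h]

theorem QD_projAlg {q : ℝ} (hq : 1 < q) {n : ℕ} {w : Fin (n + 1) → (Hn n →L[ℂ] Hn n)}
    (hw : IsWFamily q w) {x : Hn n →L[ℂ] Hn n} (hx : x ∈ projAlg w) : QD x := by
  refine projAlg_induction (QD_closed n) (fun i j => ?_) QD_algebraMap (fun _ _ => QD_add)
    (fun _ _ _ _ => QD_mul) (fun _ => QD_star) hx
  by_cases h : i = 0 ∨ j = 0
  · exact QD_compact (gen_zero hq hw h)
  · push Not at h
    obtain ⟨i, rfl⟩ := Fin.exists_succ_eq.2 h.1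
    obtain ⟨j, rfl⟩ := Fin.exists_succ_eq.2 h.2
    refine tendsto_const_nhds.congr fun N => ?_
    have h1 := congrArg star (PN_comm hw i N)
    rw [star_mul, star_mul, PN_star, PN_star] at h1
    rw [← mul_assoc, ← h1, mul_assoc, mul_assoc, PN_comm hw j N, sub_self]

theorem Lo_algebraMap {n : ℕ} (c : ℂ) :
    Lo 0 (algebraMap ℂ (Hn n →L[ℂ] Hn n) c) = algebraMap ℂ _ c := by
  rw [Algebra.algebraMap_eq_smul_one, Algebra.algebraMap_eq_smul_one, Lo_smul, Lo_one]

theorem Lo_mem {q : ℝ} (hq : 1 < q) {n : ℕ}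
    {w : Fin (n + 2) → (Hn (n + 1) →L[ℂ] Hn (n + 1))}
    (hw : IsWFamily q w) {w' : Fin (n + 1) → (Hn n →L[ℂ] Hn n)} (hw' : IsWFamily q w')
    {x : Hn n →L[ℂ] Hn n} (hx : x ∈ projAlg w') : Lo 0 x ∈ projAlg w := by
  refine projAlg_induction (p := fun x => Lo 0 x ∈ projAlg w)
    ((projAlg_closed w).preimage (Lo_continuous 0)) (fun i j => ?_) (fun c => ?_)
    (fun x y hx hy => ?_) (fun x y _ hy' hx hy => ?_) (fun x hx => ?_) hx
  · have := sub_mem (gen_mem w i.succ j.succ) (compact_mem hq hw (gen_succ hq hw hw' i j))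
    rwa [_root_.sub_sub_cancel] at this
  · rw [Lo_algebraMap]; exact algebraMap_mem _ c
  · rw [Lo_add]; exact add_mem hx hy
  · have := sub_mem (mul_mem hx hy) (compact_mem hq hw (Lo_mul x (QD_projAlg hq hw' hy')))
    rwa [_root_.sub_sub_cancel] at this
  · rw [← Lo_star]; exact star_mem hx

/-- The relation defining the quotient map. -/
def QRel {n : ℕ} (w' : Fin (n + 1) → (Hn n →L[ℂ] Hn n)) (x : Hn (n + 1) →L[ℂ] Hn (n + 1))
    (x' : Hn n →L[ℂ] Hn n) : Prop := x' ∈ projAlg w' ∧ x - Lo 0 x' ∈ compactOps (Hn (n + 1))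

theorem QRel.unique {n : ℕ} {w' : Fin (n + 1) → (Hn n →L[ℂ] Hn n)}
    {x : Hn (n + 1) →L[ℂ] Hn (n + 1)} {x' y' : Hn n →L[ℂ] Hn n} (h : QRel w' x x')
    (h2 : QRel w' x y') : x' = y' := by
  have := norm_le_of_compact 0 (x' - y') (by
    have := sub_mem h.2 h2.2
    rw [Lo_sub]
    convert this using 1
    abel)
  rw [norm_zero, norm_le_zero_iff] at this
  exact sub_eq_zero.1 this

theorem QRel.add {n : ℕ} {w' : Fin (n + 1) → (Hn n →L[ℂ] Hn n)}
    {x y : Hn (n + 1) →L[ℂ] Hn (n + 1)} {x' y' : Hn n →L[ℂ] Hn n} (h : QRel w' x x')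
    (h2 : QRel w' y y') : QRel w' (x + y) (x' + y') := by
  refine ⟨add_mem h.1 h2.1, ?_⟩
  rw [Lo_add, add_sub_add_comm]
  exact add_mem h.2 h2.2

theorem QRel.sub {n : ℕ} {w' : Fin (n + 1) → (Hn n →L[ℂ] Hn n)}
    {x y : Hn (n + 1) →L[ℂ] Hn (n + 1)} {x' y' : Hn n →L[ℂ] Hn n} (h : QRel w' x x')
    (h2 : QRel w' y y') : QRel w' (x - y) (x' - y') := by
  refine ⟨sub_mem h.1 h2.1, ?_⟩
  rw [Lo_sub, sub_sub_sub_comm]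
  exact sub_mem h.2 h2.2

theorem QRel.mul {q : ℝ} (hq : 1 < q) {n : ℕ} {w' : Fin (n + 1) → (Hn n →L[ℂ] Hn n)}
    (hw' : IsWFamily q w')
    {x y : Hn (n + 1) →L[ℂ] Hn (n + 1)} {x' y' : Hn n →L[ℂ] Hn n} (h : QRel w' x x')
    (h2 : QRel w' y y') : QRel w' (x * y) (x' * y') := by
  refine ⟨mul_mem h.1 h2.1, ?_⟩
  have : x * y - Lo 0 (x' * y') = (x - Lo 0 x') * y + Lo 0 x' * (y - Lo 0 y')
      + (Lo 0 x' * Lo 0 y' - Lo 0 (x' * y')) := by noncomm_ring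
  rw [this]
  exact add_mem (add_mem (mul_mem_compactOps h.2 _) (mul_mem_compactOps' h2.2 _))
    (Lo_mul x' (QD_projAlg hq hw' h2.1))

theorem QRel.sstar {n : ℕ} {w' : Fin (n + 1) → (Hn n →L[ℂ] Hn n)}
    {x : Hn (n + 1) →L[ℂ] Hn (n + 1)} {x' : Hn n →L[ℂ] Hn n} (h : QRel w' x x') :
    QRel w' (star x) (star x') := by
  refine ⟨star_mem h.1, ?_⟩
  rw [← Lo_star, ← star_sub]
  exact star_mem h.2

theorem QRel.algMap {n : ℕ} (w' : Fin (n + 1) → (Hn n →L[ℂ] Hn n)) (c : ℂ) :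
    QRel w' (algebraMap ℂ _ c) (algebraMap ℂ _ c) := by
  refine ⟨algebraMap_mem _ c, ?_⟩
  rw [Lo_algebraMap, sub_self]
  exact zero_mem _

theorem QRel.of_compact {n : ℕ} (w' : Fin (n + 1) → (Hn n →L[ℂ] Hn n))
    {x : Hn (n + 1) →L[ℂ] Hn (n + 1)} (hx : x ∈ compactOps (Hn (n + 1))) : QRel w' x 0 := by
  refine ⟨zero_mem _, ?_⟩
  rwa [Lo_zero, sub_zero]

theorem QRel.norm_le {n : ℕ} {w' : Fin (n + 1) → (Hn n →L[ℂ] Hn n)}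
    {x : Hn (n + 1) →L[ℂ] Hn (n + 1)} {x' : Hn n →L[ℂ] Hn n} (h : QRel w' x x') : ‖x'‖ ≤ ‖x‖ :=
  norm_le_of_compact _ _ h.2

theorem QRel.closed {n : ℕ} (w' : Fin (n + 1) → (Hn n →L[ℂ] Hn n)) :
    IsClosed {x | ∃ x', QRel w' x x'} := by
  refine isClosed_of_closure_subset fun x hx => ?_
  obtain ⟨u, hu, hux⟩ := mem_closure_iff_seq_limit.1 hx
  choose u' hu' using hu
  have hc : CauchySeq u' := by
    have h1 := hux.cauchySeq
    rw [Metric.cauchySeq_iff] at h1 ⊢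
    intro ε hε
    obtain ⟨N, hN⟩ := h1 ε hε
    refine ⟨N, fun m hm k hk => lt_of_le_of_lt ?_ (hN m hm k hk)⟩
    rw [dist_eq_norm, dist_eq_norm]
    exact ((hu' m).sub (hu' k)).norm_le
  obtain ⟨x', hx'⟩ := cauchySeq_tendsto_of_complete hc
  refine ⟨x', (projAlg_closed w').mem_of_tendsto hx' (Eventually.of_forall fun m => (hu' m).1), ?_⟩
  refine (isClosed_compactOps _).mem_of_tendsto
    (hux.sub (((Lo_continuous 0).tendsto _).comp hx')) (Eventually.of_forall fun m => (hu' m).2)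

theorem QRel.exists {q : ℝ} (hq : 1 < q) {n : ℕ}
    {w : Fin (n + 2) → (Hn (n + 1) →L[ℂ] Hn (n + 1))}
    (hw : IsWFamily q w) {w' : Fin (n + 1) → (Hn n →L[ℂ] Hn n)} (hw' : IsWFamily q w')
    {x : Hn (n + 1) →L[ℂ] Hn (n + 1)} (hx : x ∈ projAlg w) : ∃ x', QRel w' x x' := by
  refine projAlg_induction (p := fun x => ∃ x', QRel w' x x') (QRel.closed w') (fun i j => ?_)
    (fun c => ⟨_, QRel.algMap w' c⟩) (fun x y ⟨x', hx⟩ ⟨y', hy⟩ => ⟨_, hx.add hy⟩)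
    (fun x y _ _ ⟨x', hx⟩ ⟨y', hy⟩ => ⟨_, hx.mul hq hw' hy⟩) (fun x ⟨x', hx⟩ => ⟨_, hx.sstar⟩) hx
  by_cases h : i = 0 ∨ j = 0
  · exact ⟨0, QRel.of_compact _ (gen_zero hq hw h)⟩
  · push Not at h
    obtain ⟨i, rfl⟩ := Fin.exists_succ_eq.2 h.1
    obtain ⟨j, rfl⟩ := Fin.exists_succ_eq.2 h.2
    exact ⟨_, gen_mem w' i j, gen_succ hq hw hw' i j⟩

/-- The quotient map. -/
theorem exists_rho {q : ℝ} (hq : 1 < q) {n : ℕ}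
    {w : Fin (n + 2) → (Hn (n + 1) →L[ℂ] Hn (n + 1))}
    (hw : IsWFamily q w) {w' : Fin (n + 1) → (Hn n →L[ℂ] Hn n)} (hw' : IsWFamily q w') :
    ∃ ρ : projAlg w →⋆ₐ[ℂ] projAlg w', Continuous ρ ∧ Function.Surjective ρ ∧
      ∀ x : projAlg w, ρ x = 0 ↔ (x : Hn (n + 1) →L[ℂ] Hn (n + 1)) ∈ compactOps (Hn (n + 1)) := by
  have h : ∀ x : projAlg w, ∃ x', QRel w' (x : Hn (n + 1) →L[ℂ] Hn (n + 1)) x' := fun x =>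
    QRel.exists hq hw hw' x.2
  choose r hr using h
  let ρ : projAlg w →⋆ₐ[ℂ] projAlg w' :=
    { toFun := fun x => ⟨r x, (hr x).1⟩
      map_one' := Subtype.ext ((hr 1).unique (by simpa using QRel.algMap w' 1))
      map_mul' := fun x y => Subtype.ext ((hr (x * y)).unique ((hr x).mul hq hw' (hr y)))
      map_zero' := Subtype.ext ((hr 0).unique (by simpa using QRel.algMap w' 0))
      map_add' := fun x y => Subtype.ext ((hr (x + y)).unique ((hr x).add (hr y)))
      commutes' := fun c => Subtype.ext ((hr _).unique (QRel.algMap w' c))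
      map_star' := fun x => Subtype.ext ((hr (star x)).unique (hr x).sstar) }
  have hρ : ∀ x, ((ρ x : projAlg w') : Hn n →L[ℂ] Hn n) = r x := fun x => rfl
  refine ⟨ρ, ?_, ?_, ?_⟩
  · refine LipschitzWith.continuous (K := 1) (LipschitzWith.of_dist_le_mul fun x y => ?_)
    rw [Subtype.dist_eq, Subtype.dist_eq, hρ, hρ, dist_eq_norm, dist_eq_norm]
    simpa using ((hr x).sub (hr y)).norm_le
  · intro x'
    refine ⟨⟨Lo 0 (x' : Hn n →L[ℂ] Hn n), Lo_mem hq hw hw' x'.2⟩, Subtype.ext ?_⟩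
    rw [hρ]
    refine (hr _).unique ⟨x'.2, ?_⟩
    rw [sub_self]
    exact zero_mem _
  · intro x
    constructor
    · intro h
      have h1 : r x = 0 := congrArg Subtype.val h
      have h2 := (hr x).2
      rwa [h1, Lo_zero, sub_zero] at h2
    · intro h
      exact Subtype.ext ((hr x).unique (QRel.of_compact w' h))

theorem compSeq_zero (w : Fin (0 + 1) → (Hn 0 →L[ℂ] Hn 0)) :
    ∃ φ : (projAlg w) →⋆ₐ[ℂ] ℂ, Function.Surjective φ ∧ ∀ x : projAlg w, φ x = 0 ↔ x = 0 := by
  have hall : ∀ x : Hn 0 →L[ℂ] Hn 0, x (en 0) = (x (en 0) 0) • en 0 := by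
    intro x
    ext k
    rw [Subsingleton.elim k 0]
    simp [en_apply, lp.coeFn_smul]
  let φ : (projAlg w) →⋆ₐ[ℂ] ℂ :=
    { toFun := fun x => (x : Hn 0 →L[ℂ] Hn 0) (en 0) 0
      map_one' := by simp [en_apply]
      map_mul' := fun x y => by
        rw [MulMemClass.coe_mul, ContinuousLinearMap.mul_apply, hall y, map_smul, lp.coeFn_smul,
          Pi.smul_apply, smul_eq_mul, mul_comm]
        congr 1
        rw [← hall y]
      map_zero' := by simp
      map_add' := fun x y => rfl
      commutes' := fun c => by
        change (algebraMap ℂ (Hn 0 →L[ℂ] Hn 0) c) (en 0) 0 = c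
        rw [Algebra.algebraMap_eq_smul_one]
        simp [en_apply]
      map_star' := fun x => by
        change (star (x : Hn 0 →L[ℂ] Hn 0)) (en 0) 0 = star ((x : Hn 0 →L[ℂ] Hn 0) (en 0) 0)
        rw [← inner_en, ContinuousLinearMap.star_eq_adjoint,
          ContinuousLinearMap.adjoint_inner_right, ← inner_conj_symm, inner_en]
        rfl }
  have hφ : ∀ x, φ x = (x : Hn 0 →L[ℂ] Hn 0) (en 0) 0 := fun x => rfl
  refine ⟨φ, fun c => ⟨algebraMap ℂ _ c, ?_⟩, fun x => ⟨fun h => ?_, fun h => by rw [h, map_zero]⟩⟩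
  · rw [AlgHomClass.commutes]; rfl
  · refine Subtype.ext (ext_en fun k => ?_)
    rw [Subsingleton.elim k 0, hall, ← hφ, h]
    simp

/-- Existence of the composition sequence. -/
def CS {n : ℕ} (w : Fin (n + 1) → (Hn n →L[ℂ] Hn n)) : Prop :=
  ∃ I : ℕ → NonUnitalStarSubalgebra ℂ (projAlg w),
    (∀ x : projAlg w, x ∈ I 0) ∧
    (∀ k : ℕ, k ≤ n → I (k + 1) ≤ I k) ∧
    (∀ x : projAlg w, x ∈ I (n + 1) ↔ x = 0) ∧
    (∀ k : ℕ, k ≤ n + 1 → IsClosed ((I k : Set (projAlg w)))) ∧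
    (∀ k : ℕ, k ≤ n + 1 → ∀ a x : projAlg w, a ∈ I k → x * a ∈ I k ∧ a * x ∈ I k) ∧
    (∃ φ₀ : (projAlg w) →⋆ₐ[ℂ] ℂ,
      Function.Surjective φ₀ ∧ ∀ x : projAlg w, φ₀ x = 0 ↔ x ∈ I 1) ∧
    (∀ k : ℕ, 1 ≤ k → k ≤ n →
      ∃ ψ : (I k) →⋆ₙₐ[ℂ] (compactOps (Hn k)),
        Function.Surjective ψ ∧
        ∀ x : I k, ψ x = 0 ↔ (x : projAlg w) ∈ I (k + 1))

theorem CS_zero (w : Fin (0 + 1) → (Hn 0 →L[ℂ] Hn 0)) : CS w := by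
  obtain ⟨φ, hφ, hφ'⟩ := compSeq_zero w
  have hb : ∀ x : projAlg w, x ∈ (⊥ : NonUnitalStarSubalgebra ℂ (projAlg w)) ↔ x = 0 :=
    fun x => NonUnitalStarAlgebra.mem_bot
  obtain ⟨I, hI0, hI1⟩ : ∃ I : ℕ → NonUnitalStarSubalgebra ℂ (projAlg w),
      (∀ x, x ∈ I 0) ∧ ∀ k x, x ∈ I (k + 1) ↔ x = 0 :=
    ⟨fun k => if k = 0 then ⊤ else ⊥, fun x => NonUnitalStarAlgebra.mem_top, fun k x => hb x⟩
  refine ⟨I, hI0, fun k hk x _ => ?_, hI1 0, fun k _ => ?_,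
    fun k _ a x ha => ?_, ⟨φ, hφ, fun x => ?_⟩, fun k h1 h2 => ?_⟩
  · obtain rfl : k = 0 := by omega
    exact hI0 x
  · cases k with
    | zero =>
      have : (I 0 : Set (projAlg w)) = Set.univ := Set.eq_univ_of_forall hI0
      rw [this]; exact isClosed_univ
    | succ k =>
      have : (I (k + 1) : Set (projAlg w)) = {0} := Set.ext (hI1 k)
      rw [this]; exact isClosed_singleton
  · cases k with
    | zero => exact ⟨hI0 _, hI0 _⟩
    | succ k =>
      rw [hI1] at ha
      rw [hI1, hI1, ha, mul_zero, zero_mul]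
      exact ⟨rfl, rfl⟩
  · rw [hφ']; exact (hI1 0 x).symm
  · omega

theorem CS_succ {q : ℝ} (hq : 1 < q) {n : ℕ}
    {w : Fin (n + 2) → (Hn (n + 1) →L[ℂ] Hn (n + 1))}
    (hw : IsWFamily q w) {w' : Fin (n + 1) → (Hn n →L[ℂ] Hn n)} (ih : CS w')
    (ρ : projAlg w →⋆ₐ[ℂ] projAlg w') (hρc : Continuous ρ) (hρs : Function.Surjective ρ)
    (hρk : ∀ x : projAlg w,
      ρ x = 0 ↔ (x : Hn (n + 1) →L[ℂ] Hn (n + 1)) ∈ compactOps (Hn (n + 1))) : CS w := by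
  obtain ⟨I', h0, h1, h2, h3, h4, ⟨φ, hφ, hφ'⟩, h6⟩ := ih
  obtain ⟨I, hI, hI2⟩ : ∃ I : ℕ → NonUnitalStarSubalgebra ℂ (projAlg w),
      (∀ k, k ≤ n + 1 → ∀ x, x ∈ I k ↔ ρ x ∈ I' k) ∧ ∀ x, x ∈ I (n + 2) ↔ x = 0 := by
    refine ⟨fun k => if k ≤ n + 1 then (I' k).comap ρ.toNonUnitalStarAlgHom else ⊥,
      fun k hk x => ?_, fun x => ?_⟩
    · beta_reduce
      rw [if_pos hk]
      exact Iff.rfl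
    · beta_reduce
      rw [if_neg (by omega)]
      exact NonUnitalStarAlgebra.mem_bot
  have hI3 : ∀ x, x ∈ I (n + 1) ↔
      (x : Hn (n + 1) →L[ℂ] Hn (n + 1)) ∈ compactOps (Hn (n + 1)) := by
    intro x
    rw [hI _ le_rfl, h2, hρk]
  have hI4 : ∀ k, k ≤ n + 2 → k ≤ n + 1 ∨ k = n + 2 := fun k hk => by omega
  refine ⟨I, fun x => ?_, fun k hk => ?_, hI2, fun k hk => ?_,
    fun k hk a x ha => ?_, ⟨φ.comp ρ, hφ.comp hρs, fun x => ?_⟩, fun k hk1 hk2 => ?_⟩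
  · rw [hI _ (by omega)]; exact h0 _
  · intro x hx
    rcases hI4 (k + 1) (by omega) with h | h
    · rw [hI _ h] at hx
      rw [hI _ hk]
      exact h1 k (by omega) hx
    · rw [h, hI2] at hx
      rw [hx]
      exact zero_mem _
  · rcases hI4 k hk with h | rfl
    · have : (I k : Set (projAlg w)) = ρ ⁻¹' (I' k) := Set.ext (hI k h)
      rw [this]
      exact (h3 k h).preimage hρc
    · have : (I (n + 2) : Set (projAlg w)) = {0} := Set.ext hI2
      rw [this]; exact isClosed_singleton
  · rcases hI4 k hk with h | rfl
    · rw [hI _ h] at ha ⊢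
      rw [hI _ h, map_mul, map_mul]
      exact h4 k h _ _ ha
    · rw [hI2] at ha
      rw [hI2, hI2, ha]; simp
  · rw [hI _ (by omega), ← hφ']; rfl
  · rcases (by omega : k ≤ n ∨ k = n + 1) with h | rfl
    · obtain ⟨ψ, hψ, hψ'⟩ := h6 k hk1 h
      let r : I k →⋆ₙₐ[ℂ] I' k :=
        { toFun := fun x => ⟨ρ x, (hI k hk2 x).1 x.2⟩
          map_smul' := fun c x => Subtype.ext (map_smul ρ c (x : projAlg w))
          map_zero' := Subtype.ext (map_zero ρ)
          map_add' := fun x y => Subtype.ext (map_add ρ (x : projAlg w) y)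
          map_mul' := fun x y => Subtype.ext (map_mul ρ (x : projAlg w) y)
          map_star' := fun x => Subtype.ext (map_star ρ (x : projAlg w)) }
      have hr : Function.Surjective r := by
        intro y
        obtain ⟨x, hx⟩ := hρs (y : projAlg w')
        exact ⟨⟨x, (hI k hk2 x).2 (by rw [hx]; exact y.2)⟩, Subtype.ext hx⟩
      refine ⟨ψ.comp r, hψ.comp hr, fun x => ?_⟩
      rw [hI _ (by omega)]
      exact hψ' (r x)
    · let r : I (n + 1) →⋆ₙₐ[ℂ] compactOps (Hn (n + 1)) :=
        { toFun := fun x => ⟨((x : projAlg w) : Hn (n + 1) →L[ℂ] Hn (n + 1)), (hI3 x).1 x.2⟩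
          map_smul' := fun c x => rfl
          map_zero' := rfl
          map_add' := fun x y => rfl
          map_mul' := fun x y => rfl
          map_star' := fun x => rfl }
      refine ⟨r, fun y => ?_, fun x => ?_⟩
      · exact ⟨⟨⟨y, compact_mem hq hw y.2⟩, (hI3 _).2 y.2⟩, rfl⟩
      · rw [hI2]
        constructor
        · intro h
          have h' : ((r x : compactOps (Hn (n + 1))) : Hn (n + 1) →L[ℂ] Hn (n + 1)) = 0 := by
            rw [h]; rfl
          exact Subtype.ext h'
        · intro h
          have h' : ((x : projAlg w) : Hn (n + 1) →L[ℂ] Hn (n + 1)) = 0 := by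
            rw [h]; rfl
          exact Subtype.ext h'

theorem CS_all {q : ℝ} (hq : 1 < q) (n : ℕ) :
    ∀ (w : Fin (n + 1) → (Hn n →L[ℂ] Hn n)), IsWFamily q w → CS w := by
  induction n with
  | zero => exact fun w _ => CS_zero w
  | succ n ih =>
    intro w hw
    obtain ⟨w', hw'⟩ := exists_WFamily hq n
    obtain ⟨ρ, hρc, hρs, hρk⟩ := exists_rho hq hw hw'
    exact CS_succ hq hw (ih w' hw') ρ hρc hρs hρk

/-- For every `n ≥ 1` and real `q > 1`, `B_n(q)` (the concrete realization of
`C(ℂP_q^n)`) has a composition sequence `B_n(q) = I_0 ⊇ I_1 ⊇ ⋯ ⊇ I_n ⊇ I_{n+1} = 0` of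
closed two-sided ideals such that `I_0/I_1 ≅ ℂ` (witnessed by a surjective unital
*-homomorphism `B_n(q) → ℂ` with kernel `I_1`) and, for `1 ≤ k ≤ n`,
`I_k/I_{k+1} ≅ K(ℓ²(ℕᵏ)) ≅ K(ℓ²(ℤᵏ))` (witnessed by a surjective *-homomorphism
`I_k → K(ℓ²(ℕᵏ))` with kernel `I_{k+1}`). -/
theorem stmt_2 (n : ℕ) (hn : 1 ≤ n) (q : ℝ) (hq : 1 < q)
    (w : Fin (n + 1) → (Hn n →L[ℂ] Hn n)) (hw : IsWFamily q w) :
    ∃ I : ℕ → NonUnitalStarSubalgebra ℂ (projAlg w),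
      (∀ x : projAlg w, x ∈ I 0) ∧
      (∀ k : ℕ, k ≤ n → I (k + 1) ≤ I k) ∧
      (∀ x : projAlg w, x ∈ I (n + 1) ↔ x = 0) ∧
      (∀ k : ℕ, k ≤ n + 1 → IsClosed ((I k : Set (projAlg w)))) ∧
      (∀ k : ℕ, k ≤ n + 1 → ∀ a x : projAlg w, a ∈ I k → x * a ∈ I k ∧ a * x ∈ I k) ∧
      (∃ φ₀ : (projAlg w) →⋆ₐ[ℂ] ℂ,
        Function.Surjective φ₀ ∧ ∀ x : projAlg w, φ₀ x = 0 ↔ x ∈ I 1) ∧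
      (∀ k : ℕ, 1 ≤ k → k ≤ n →
        ∃ ψ : (I k) →⋆ₙₐ[ℂ] (compactOps (Hn k)),
          Function.Surjective ψ ∧
          ∀ x : I k, ψ x = 0 ↔ (x : projAlg w) ∈ I (k + 1)) := by
  exact CS_all hq n w hw
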